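/- arXiv:1705.06372 — 3 statements merged into one kernel-verified Lean document; each statement's English description precedes it below -/
import Mathlib

section
/- Let q = 2^h, let S be a subgroup of the additive group (F_q,+) of order q/4, and let α, β ∈ F_q. Suppose that the additive subgroups S + αS, S + βS, αS + βS and (α+1)S + (β+1)S of (F_q,+) all have order q/2. Then either (a) β = α + 1 and there exists γ ∈ F_q with S = {x ∈ F_q : Tr(γx) = 0 and Tr(αγx) = 0}, or (b) 3 divides h, α and β lie in the subfield F_8 of F_q (i.e. α^8 = α and β^8 = β), and S ∩ αS ∩ βS ∩ (α+1)S ∩ (β+1)S is a subgroup of (F_q,+) of order q/8; moreover, in case (b), if S + αS = {x ∈ F_q : Tr(γx) = 0} for some γ ∈ F_q, then S ∩ αS ∩ βS ∩ (α+1)S ∩ (β+1)S = {x ∈ F_q : Tr(xyγ) = 0 for all y ∈ F_8}. -/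
open scoped Classical

noncomputable section

variable {K : Type*} [Field K]

/-- The absolute trace-style sum `x + x² + x⁴ + ⋯ + x^(2^(h-1))`
(it lands in the prime subfield `F₂` when `|K| = 2^h`). -/
def Tr (h : ℕ) (x : K) : K := ∑ i ∈ Finset.range h, x ^ 2 ^ i

/-- `F₂`-independence of a tuple of elements of a field of characteristic two:
no nontrivial combination with coefficients `0`/`1` vanishes. -/
def F2Indep {n : ℕ} (v : Fin n → K) : Prop :=
  ∀ c : Fin n → K, (∀ i, c i = 0 ∨ c i = 1) → ∑ i, c i * v i = 0 → ∀ i, c i = 0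

/-- The `F₂`-span of a tuple of elements of a field of characteristic two. -/
def F2Span {n : ℕ} (v : Fin n → K) : Set K :=
  {x | ∃ c : Fin n → K, (∀ i, c i = 0 ∨ c i = 1) ∧ x = ∑ i, c i * v i}

/-- `α·S` for an additive subgroup `S` of the field. -/
def smulSub (α : K) (S : AddSubgroup K) : AddSubgroup K :=
  S.map (AddMonoidHom.mulLeft α)

/-- Points of `PG(2,q)`: one-dimensional subspaces of `K³`. -/
abbrev Pt (K : Type*) [Field K] := Projectivization K (Fin 3 → K)

/-- The point `(a : b : c)` of `PG(2,q)`. -/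
def pt3 (a b c : K) (habc : ¬(a = 0 ∧ b = 0 ∧ c = 0)) : Pt K :=
  Projectivization.mk K ![a, b, c] (fun h0 => habc
    ⟨by simpa using congrFun h0 0, by simpa using congrFun h0 1, by simpa using congrFun h0 2⟩)

/-- The point `(a : b)` of `PG(1,q)`. -/
def pt2 (a b : K) (hab : ¬(a = 0 ∧ b = 0)) : Projectivization K (Fin 2 → K) :=
  Projectivization.mk K ![a, b] (fun h0 => hab
    ⟨by simpa using congrFun h0 0, by simpa using congrFun h0 1⟩)

/-- An `F₂`-linear set of points of `PG(1,q)`: in characteristic two, the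
`F₂`-subspaces of `K²` are exactly its additive subgroups. -/
def IsF2Linear (T : Set (Projectivization K (Fin 2 → K))) : Prop :=
  ∃ U : AddSubgroup (Fin 2 → K),
    T = {P | ∃ u : Fin 2 → K, ∃ hu : u ≠ 0, u ∈ U ∧ Projectivization.mk K u hu = P}

/-- Lines of `PG(2,q)`: two-dimensional subspaces of `K³`. -/
def IsLine (L : Submodule K (Fin 3 → K)) : Prop := Module.finrank K L = 2

/-- Incidence of a point with a line. -/
def OnLine (P : Pt K) (L : Submodule K (Fin 3 → K)) : Prop := P.submodule ≤ L

/-- The number of points of `A` lying on the line `L`. -/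
def secantCount (A : Set (Pt K)) (L : Submodule K (Fin 3 → K)) : ℕ :=
  {P ∈ A | OnLine P L}.ncard

/-- A KM-arc of type `t`: `q+t` points meeting every line in `0`, `2` or `t` points. -/
def IsKMArc (q t : ℕ) (A : Set (Pt K)) : Prop :=
  A.ncard = q + t ∧ ∀ L : Submodule K (Fin 3 → K), IsLine L →
    secantCount A L = 0 ∨ secantCount A L = 2 ∨ secantCount A L = t

/-- The projectivity of `PG(2,q)` induced by an element of `GL(3,q)`. -/
def projMap (f : (Fin 3 → K) ≃ₗ[K] (Fin 3 → K)) : Pt K → Pt K :=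
  Projectivization.map f.toLinearMap f.injective

/-- `f` induces an elation with axis `L` and centre `R`: it fixes every point of `L`
and maps every line through `R` to itself. -/
def IsElation (f : (Fin 3 → K) ≃ₗ[K] (Fin 3 → K)) (L : Submodule K (Fin 3 → K))
    (R : Pt K) : Prop :=
  IsLine L ∧ OnLine R L ∧ (∀ P : Pt K, OnLine P L → projMap f P = P) ∧
    ∀ M : Submodule K (Fin 3 → K), IsLine M → OnLine R M →
      ∀ P : Pt K, OnLine P M → OnLine (projMap f P) M

/-- `f` induces an elation with axis `L` (for some centre on `L`). -/
def IsElationAxis (f : (Fin 3 → K) ≃ₗ[K] (Fin 3 → K)) (L : Submodule K (Fin 3 → K)) : Prop :=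
  ∃ R : Pt K, IsElation f L R

/-- The projectivity induced by `f` stabilises the point set `A`. -/
def Stabilises (f : (Fin 3 → K) ≃ₗ[K] (Fin 3 → K)) (A : Set (Pt K)) : Prop :=
  projMap f '' A = A

/-- `N` lies on every `t`-secant of `A` (i.e. `N` is the `t`-nucleus). -/
def IsNucleus (t : ℕ) (A : Set (Pt K)) (N : Pt K) : Prop :=
  ∀ L : Submodule K (Fin 3 → K), IsLine L → secantCount A L = t → OnLine N L

/-- An elation KM-arc of type `t` with `t`-nucleus `N` and elation line `linf`:
for every `t`-secant `L ≠ linf`, the group of elations with axis `linf` stabilising `A`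
acts transitively on `A ∩ L`. -/
def IsElationKMArc (q t : ℕ) (A : Set (Pt K)) (N : Pt K)
    (linf : Submodule K (Fin 3 → K)) : Prop :=
  IsKMArc q t A ∧ IsLine linf ∧ OnLine N linf ∧ IsNucleus t A N ∧
    ∀ L : Submodule K (Fin 3 → K), IsLine L → secantCount A L = t → L ≠ linf →
      ∀ P ∈ A, OnLine P L → ∀ Q ∈ A, OnLine Q L →
        ∃ f : (Fin 3 → K) ≃ₗ[K] (Fin 3 → K),
          IsElationAxis f linf ∧ Stabilises f A ∧ projMap f P = Q

/-- A translation KM-arc with translation line `l`: the group of elations with axis `l`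
stabilising `A` acts transitively on `A \ l`. -/
def IsTranslationKMArc (A : Set (Pt K)) (l : Submodule K (Fin 3 → K)) : Prop :=
  IsLine l ∧ ∀ P ∈ A, ¬OnLine P l → ∀ Q ∈ A, ¬OnLine Q l →
    ∃ f : (Fin 3 → K) ≃ₗ[K] (Fin 3 → K),
      IsElationAxis f l ∧ Stabilises f A ∧ projMap f P = Q

/-- The line `X = 0` of `PG(2,q)`. -/
def lineX0 (K : Type*) [Field K] : Submodule K (Fin 3 → K) :=
  LinearMap.ker (LinearMap.proj (R := K) (φ := fun _ : Fin 3 => K) 0)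

/-- The line `Y = aX` of `PG(2,q)`. -/
def lineYaX (a : K) : Submodule K (Fin 3 → K) where
  carrier := {v | v 1 = a * v 0}
  add_mem' := by
    intro v w hv hw
    simp only [Set.mem_setOf_eq, Pi.add_apply] at hv hw ⊢
    rw [hv, hw]; ring
  zero_mem' := by simp
  smul_mem' := by
    intro c v hv
    simp only [Set.mem_setOf_eq, Pi.smul_apply, smul_eq_mul] at hv ⊢
    rw [hv]; ring

/-- The point set of the `q/8`-construction (Theorem 4.4 of the paper), built from
`F₂`-independent `a 0, a 1, a 2` and coset representatives `b 0, b 1, b 2`. -/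
def q8Arc (h : ℕ) (a b : Fin 3 → K) : Set (Pt K) :=
  {P | ∃ x : K, (∀ i, Tr h (a i ^ 2 * x) = 0) ∧ P = pt3 0 1 x (by simp)}
    ∪ {P | ∃ l : Fin 3 → K, (∀ i, l i = 0 ∨ l i = 1) ∧ ∃ s : K, (∀ i, Tr h (a i * s) = 0) ∧
        P = pt3 1 (l 0 * a 0 + l 1 * a 1 + l 2 * a 2)
          ((l 0 + l 1 + l 2 + l 1 * l 2) * b 0 + (l 1 + l 2 + l 0 * l 2) * b 1
            + (l 2 + l 0 * l 1) * b 2 + s) (by simp)}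

/-- The point set of the `q/16`-construction (Theorem 5.2 of the paper). -/
def q16Arc (h : ℕ) (a : Fin 4 → K) (α : K) (b : Fin 3 → K) : Set (Pt K) :=
  {P | ∃ x : K, Tr h (a 0 * (a 0 + a 3) * x) = 0 ∧ Tr h (a 1 * (a 1 + a 3) * x) = 0 ∧
      Tr h (a 2 * (a 2 + a 3) * x) = 0 ∧ Tr h (a 3 * α * x) = 1 ∧ P = pt3 0 1 x (by simp)}
    ∪ {P | ∃ l : Fin 4 → K, (∀ i, l i = 0 ∨ l i = 1) ∧ ∃ s : K, (∀ i, Tr h (a i * s) = 0) ∧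
        P = pt3 1 (l 0 * a 0 + l 1 * a 1 + l 2 * a 2 + l 3 * a 3)
          ((l 0 + l 1 + l 2 + l 1 * l 2) * b 0 + (l 1 + l 2 + l 0 * l 2) * b 1
            + (l 2 + l 0 * l 1) * b 2 + s) (by simp)}

/-- The semilinear collineation of `PG(2,q)` sending the point spanned by `v`
to the point spanned by `M (ψ ∘ v)`. -/
def frobMap (ψ : K ≃+* K) (M : (Fin 3 → K) ≃ₗ[K] (Fin 3 → K)) (P : Pt K) : Pt K :=
  Projectivization.mk K (M fun i => ψ (P.rep i)) (by
    rw [LinearEquiv.map_ne_zero_iff]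
    intro h0
    apply P.rep_nonzero
    funext i
    have h2 : P.rep i = 0 := ψ.injective (by rw [map_zero]; exact congrFun h0 i)
    simpa using h2)

/-!
Dualising with respect to the trace form, `W = Sᗮ` has order `4`, and `(S + αS)ᗮ = W ∩ α⁻¹W ≠ 0`
gives `W = {0, g, αg, (α + 1)g}`. The remaining three sums then say that `β`, `β / α` and
`(β + 1) / (α + 1)` are ratios of distinct nonzero elements of `W`, i.e. cross-ratio conjugates of
`α`. Unless `β = α + 1`, this forces a cubic equation on `α` that puts it into `F₈`. Finally
`(g F₈)ᗮ` is contained in `cS` for every nonzero `c ∈ F₈`, while `S ∩ αS` has order `q / 8`;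
since `|F₈| ≤ 8`, everything in between is equal.
-/

section Subgroups

variable {G : Type*} [AddCommGroup G]

lemma card_inf_mul_card_sup (H L : AddSubgroup G) :
    Nat.card (H ⊓ L : AddSubgroup G) * Nat.card (H ⊔ L : AddSubgroup G) =
      Nat.card H * Nat.card L := by
  have card_mul_relIndex {A B : AddSubgroup G} (hAB : A ≤ B) :
      Nat.card A * A.relIndex B = Nat.card B := by
    simpa only [AddSubgroup.relIndex_bot_left] using
      AddSubgroup.relIndex_mul_relIndex ⊥ A B bot_le hAB
  rw [← card_mul_relIndex (le_sup_left : H ≤ H ⊔ L),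
    ← card_mul_relIndex (inf_le_right : H ⊓ L ≤ L), AddSubgroup.relIndex_sup_left,
    AddSubgroup.inf_relIndex_right]
  ring

lemma coe_eq_of_card_eq_four {W : AddSubgroup G} (hW : Nat.card W = 4) {x y : G}
    (hx : x ∈ W) (hy : y ∈ W) (hx0 : x ≠ 0) (hy0 : y ≠ 0) (hxy : x ≠ y) (hxy0 : x + y ≠ 0) :
    (W : Set G) = {0, x, y, x + y} := by
  have hcard : ({0, x, y, x + y} : Finset G).card = 4 := by
    rw [Finset.card_eq_succ]
    refine ⟨0, {x, y, x + y}, ?_, rfl, Finset.card_eq_three.2 ⟨x, y, x + y, hxy, ?_, ?_, rfl⟩⟩ <;>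
      simp [hx0, hy0, hxy0, eq_comm]
  have hsub : (({0, x, y, x + y} : Finset G) : Set G) ⊆ W := by
    simp [Set.insert_subset_iff, hx, hy, add_mem]
  have hfin : (W : Set G).Finite := Set.finite_of_ncard_ne_zero (by
    rw [← Nat.card_coe_set_eq]; exact hW.trans_ne four_ne_zero)
  have heq := Set.eq_of_subset_of_ncard_le hsub
    (by rw [Set.ncard_coe_finset, hcard]; exact hW.le) hfin
  simpa using heq.symm

lemma ne_top_of_card_eq_two_mul [Finite G] {H L : AddSubgroup G} {q : ℕ} (hG : Nat.card G = q)
    (hH : 4 * Nat.card H = q) (hL : Nat.card L = 2 * Nat.card H) : L ≠ ⊤ := by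
  have hpos : 0 < Nat.card H := Nat.card_pos
  rintro rfl
  rw [AddSubgroup.card_top] at hL
  omega

end Subgroups

section Scaling

variable {a b : K} {S T : AddSubgroup K}

lemma mem_smulSub {x : K} : x ∈ smulSub a S ↔ ∃ s ∈ S, a * s = x := Iff.rfl

lemma smulSub_one : smulSub 1 S = S := by
  ext x
  simp [mem_smulSub]

lemma mem_smulSub_iff_inv_mul_mem (ha : a ≠ 0) {x : K} : x ∈ smulSub a S ↔ a⁻¹ * x ∈ S := by
  refine ⟨?_, fun hx => ⟨_, hx, mul_inv_cancel_left₀ ha x⟩⟩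
  rintro ⟨s, hs, rfl⟩
  simpa [ha] using hs

lemma smulSub_smulSub : smulSub a (smulSub b S) = smulSub (a * b) S := by
  ext x
  simp [mem_smulSub, mul_assoc]

lemma smulSub_mono (hST : S ≤ T) : smulSub a S ≤ smulSub a T := AddSubgroup.map_mono hST

lemma card_smulSub (ha : a ≠ 0) : Nat.card (smulSub a S) = Nat.card S :=
  AddSubgroup.card_map_of_injective (mul_right_injective₀ ha)

lemma card_smulSub_le [Finite K] : Nat.card (smulSub a S) ≤ Nat.card S :=
  Nat.card_le_card_of_surjective _ ((AddMonoidHom.mulLeft a).addSubgroupMap_surjective S)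

lemma ne_zero_and_ne_of_card_lt_card_sup [Finite K]
    (h : Nat.card S < Nat.card (smulSub a S ⊔ smulSub b S : AddSubgroup K)) :
    a ≠ 0 ∧ b ≠ 0 ∧ a ≠ b := by
  have smulSub_zero : smulSub 0 S = ⊥ := by
    ext x
    simp [mem_smulSub, eq_comm, show ∃ s, s ∈ S from ⟨0, S.zero_mem⟩]
  refine ⟨?_, ?_, ?_⟩ <;> rintro rfl <;> refine h.not_ge ?_
  · rw [smulSub_zero, bot_sup_eq]
    exact card_smulSub_le
  · rw [smulSub_zero, sup_bot_eq]
    exact card_smulSub_le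
  · rw [sup_idem]
    exact card_smulSub_le

lemma ne_zero_and_ne_of_card_sup_eq [Finite K]
    (hsup : Nat.card (smulSub a S ⊔ smulSub b S : AddSubgroup K) = 2 * Nat.card S) :
    a ≠ 0 ∧ b ≠ 0 ∧ a ≠ b :=
  ne_zero_and_ne_of_card_lt_card_sup (S := S) <| by
    have hpos : 0 < Nat.card S := Nat.card_pos
    omega

lemma smulSub_subfield_eq_of_mem {F : Subfield K} {c : K}
    (hc : c ∈ smulSub a F.toAddSubgroup) (hc0 : c ≠ 0) :
    smulSub c F.toAddSubgroup = smulSub a F.toAddSubgroup := by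
  obtain ⟨d, hd : d ∈ F, rfl : a * d = c⟩ := hc
  obtain ⟨ha, hd0⟩ := mul_ne_zero_iff.1 hc0
  ext x
  have hx : d⁻¹ * (a⁻¹ * x) ∈ F ↔ a⁻¹ * x ∈ F :=
    ⟨fun h => by simpa [hd0] using mul_mem hd h, mul_mem (inv_mem hd)⟩
  rw [mem_smulSub_iff_inv_mul_mem hc0, mem_smulSub_iff_inv_mul_mem ha, mul_inv, mul_comm a⁻¹,
    mul_assoc]
  exact hx

end Scaling

section TraceDual

variable {h : ℕ}

lemma Tr_zero : Tr h (0 : K) = 0 := by simp [Tr]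

lemma finrank_zmod_two_eq [Finite K] [Algebra (ZMod 2) K] (hK : Nat.card K = 2 ^ h) :
    Module.finrank (ZMod 2) K = h := by
  have hcard := Module.natCard_eq_pow_finrank (K := ZMod 2) (V := K)
  rw [hK, Nat.card_zmod] at hcard
  exact (Nat.pow_right_injective le_rfl hcard).symm

variable [CharP K 2]

lemma Tr_add (x y : K) : Tr h (x + y) = Tr h x + Tr h y := by
  simp only [Tr, add_pow_char_pow, Finset.sum_add_distrib]

/-- The orthogonal complement of `S` with respect to the trace form `(x, y) ↦ Tr (x y)`. -/
def trDual (h : ℕ) (S : AddSubgroup K) : AddSubgroup K where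
  carrier := {y | ∀ x ∈ S, Tr h (x * y) = 0}
  zero_mem' x _ := by rw [mul_zero, Tr_zero]
  add_mem' {y z} hy hz x hx := by rw [mul_add, Tr_add, hy x hx, hz x hx, add_zero]
  neg_mem' {y} hy x hx := by rw [CharTwo.neg_eq, hy x hx]

variable {S T : AddSubgroup K}

lemma mem_trDual {y : K} : y ∈ trDual h S ↔ ∀ x ∈ S, Tr h (x * y) = 0 := Iff.rfl

lemma trDual_anti (hST : S ≤ T) : trDual h T ≤ trDual h S := fun _ hy x hx => hy x (hST hx)

lemma mul_mem_trDual_iff {a y : K} : a * y ∈ trDual h S ↔ y ∈ trDual h (smulSub a S) := by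
  simp only [mem_trDual, mem_smulSub, forall_exists_index, and_imp, forall_apply_eq_imp_iff₂,
    mul_comm a, mul_assoc, mul_left_comm]

lemma mem_trDual_smulSub {a x : K} :
    x ∈ trDual h (smulSub a S) ↔ ∀ y ∈ S, Tr h (x * y * a) = 0 := by
  rw [← mul_mem_trDual_iff, mem_trDual]
  refine forall₂_congr fun y _ => ?_
  rw [show y * (a * x) = x * y * a by ring]

lemma trDual_smulSub {a : K} (ha : a ≠ 0) :
    trDual h (smulSub a S) = smulSub a⁻¹ (trDual h S) := by
  ext y
  rw [mem_smulSub_iff_inv_mul_mem (inv_ne_zero ha), inv_inv, mul_mem_trDual_iff]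

variable [Finite K]

lemma toZModSubmodule_trDual [Algebra (ZMod 2) K] (hK : Nat.card K = 2 ^ h) :
    AddSubgroup.toZModSubmodule 2 (trDual h S) =
      (Algebra.traceForm (ZMod 2) K).orthogonal (AddSubgroup.toZModSubmodule 2 S) := by
  have Tr_eq_zero_iff (x : K) : Tr h x = 0 ↔ Algebra.trace (ZMod 2) K x = 0 := by
    have htr := FiniteField.algebraMap_trace_eq_sum_pow (ZMod 2) K x
    rw [finrank_zmod_two_eq hK, Nat.card_zmod] at htr
    rw [Tr, ← htr, map_eq_zero]
  ext y
  simp only [AddSubgroup.mem_toZModSubmodule, mem_trDual, Tr_eq_zero_iff,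
    LinearMap.BilinForm.mem_orthogonal_iff, Algebra.traceForm_apply]

lemma trDual_trDual (hK : Nat.card K = 2 ^ h) : trDual h (trDual h S) = S := by
  let : Algebra (ZMod 2) K := ZMod.algebra K 2
  apply (AddSubgroup.toZModSubmodule 2).injective
  rw [toZModSubmodule_trDual hK, toZModSubmodule_trDual hK,
    LinearMap.BilinForm.orthogonal_orthogonal (traceForm_nondegenerate _ _)
      (Algebra.traceForm_isSymm _).isRefl]

lemma card_mul_card_trDual (hK : Nat.card K = 2 ^ h) :
    Nat.card S * Nat.card (trDual h S) = 2 ^ h := by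
  let : Algebra (ZMod 2) K := ZMod.algebra K 2
  have card_eq (T : AddSubgroup K) :
      Nat.card T = 2 ^ Module.finrank (ZMod 2) (AddSubgroup.toZModSubmodule 2 T) := by
    have hT := Module.natCard_eq_pow_finrank (K := ZMod 2) (V := AddSubgroup.toZModSubmodule 2 T)
    rwa [Nat.card_zmod] at hT
  rw [card_eq S, card_eq (trDual h S), ← pow_add, toZModSubmodule_trDual hK,
    LinearMap.BilinForm.finrank_orthogonal (traceForm_nondegenerate _ _),
    Nat.add_sub_of_le (Submodule.finrank_le _), finrank_zmod_two_eq hK]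

lemma exists_ne_zero_mul_mem_trDual (hK : Nat.card K = 2 ^ h) {a b : K}
    (hab : smulSub a S ⊔ smulSub b S ≠ ⊤) :
    ∃ w ≠ 0, a * w ∈ trDual h S ∧ b * w ∈ trDual h S := by
  have hne : trDual h (smulSub a S ⊔ smulSub b S) ≠ ⊥ := fun hbot => hab <| by
    rw [← AddSubgroup.card_eq_iff_eq_top, hK,
      ← card_mul_card_trDual (S := smulSub a S ⊔ smulSub b S) hK, hbot, AddSubgroup.card_bot,
      mul_one]
  obtain ⟨⟨w, hw⟩, hw0⟩ := AddSubgroup.ne_bot_iff_exists_ne_zero.1 hne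
  exact ⟨w, fun h0 => hw0 (Subtype.ext h0),
    mul_mem_trDual_iff.2 (trDual_anti le_sup_left hw),
    mul_mem_trDual_iff.2 (trDual_anti le_sup_right hw)⟩

end TraceDual

section CrossRatio

/-- The six cross-ratio conjugates of `a` in characteristic two: the ratios of distinct nonzero
elements of `{0, 1, a, a + 1}`. -/
def crossRatioConjugates (a : K) : Set K := {a, a + 1, 1 / a, (a + 1) / a, 1 / (a + 1), a / (a + 1)}

variable {a b g x y : K}

lemma div_mem_crossRatioConjugates (hx : x ∈ ({0, g, a * g, g + a * g} : Set K))
    (hy : y ∈ ({0, g, a * g, g + a * g} : Set K)) (hx0 : x ≠ 0) (hy0 : y ≠ 0) (hxy : x ≠ y) :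
    y / x ∈ crossRatioConjugates a := by
  have hg : g ≠ 0 := by
    rintro rfl
    simp_all
  have eq_mul {z : K} (hz : z ∈ ({0, g, a * g, g + a * g} : Set K)) (hz0 : z ≠ 0) :
      ∃ u, (u = 1 ∨ u = a ∨ u = a + 1) ∧ u * g = z := by
    rcases hz with rfl | rfl | rfl | rfl
    exacts [absurd rfl hz0, ⟨1, .inl rfl, one_mul _⟩, ⟨a, .inr (.inl rfl), rfl⟩,
      ⟨a + 1, .inr (.inr rfl), by ring⟩]
  obtain ⟨u, hu, rfl⟩ := eq_mul hx hx0
  obtain ⟨v, hv, rfl⟩ := eq_mul hy hy0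
  rw [mul_div_mul_right _ _ hg]
  rcases hu with rfl | rfl | rfl <;> rcases hv with rfl | rfl | rfl <;>
    first | exact absurd rfl hxy | simp [crossRatioConjugates]

variable [CharP K 2]

lemma crossRatioConjugates_add_one : crossRatioConjugates (a + 1) = crossRatioConjugates a := by
  have : a + 1 + 1 = a := CharTwo.add_cancel_right a 1
  ext x
  simp only [crossRatioConjugates, this, Set.mem_insert_iff, Set.mem_singleton_iff]
  tauto

end CrossRatio

section FieldOfOrderEight

/-- The elements of `K` fixed by the `n`-th power of the Frobenius `x ↦ x ^ p`; in a large enough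
field of characteristic `p`, this is the subfield of order `p ^ n`. -/
def frobeniusFixedSubfield (K : Type*) [Field K] (p n : ℕ) [ExpChar K p] : Subfield K :=
  (iterateFrobenius K p n).eqLocusField (RingHom.id K)

lemma mem_frobeniusFixedSubfield {p n : ℕ} [ExpChar K p] {x : K} :
    x ∈ frobeniusFixedSubfield K p n ↔ x ^ p ^ n = x := Iff.rfl

lemma card_frobeniusFixedSubfield_le {p n : ℕ} [ExpChar K p] (hp : 1 < p) (hn : n ≠ 0) :
    Nat.card (frobeniusFixedSubfield K p n) ≤ p ^ n := by
  let P : Polynomial K := Polynomial.X ^ p ^ n - Polynomial.X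
  have hP : P ≠ 0 := FiniteField.X_pow_card_pow_sub_X_ne_zero K hn hp
  have hroots : (frobeniusFixedSubfield K p n : Set K) = P.rootSet K := by
    ext x
    rw [SetLike.mem_coe, mem_frobeniusFixedSubfield, Polynomial.mem_rootSet_of_ne hP]
    simp [P, sub_eq_zero]
  calc Nat.card (frobeniusFixedSubfield K p n) = (P.rootSet K).ncard := by
        rw [← hroots]; exact Nat.card_coe_set_eq _
    _ ≤ P.natDegree := P.ncard_rootSet_le K
    _ = p ^ n := FiniteField.X_pow_card_pow_sub_X_natDegree_eq K hn hp

variable [CharP K 2]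

/-- The subfield `F₈` of a field of characteristic two (the whole of `F₈` only if `K` contains
it). -/
abbrev F8 (K : Type*) [Field K] [CharP K 2] : Subfield K := frobeniusFixedSubfield K 2 3

variable {a b : K}

lemma mem_F8 : a ∈ F8 K ↔ a ^ 8 = a := Iff.rfl

lemma add_one_mem_F8_iff : a + 1 ∈ F8 K ↔ a ∈ F8 K := add_mem_cancel_right (one_mem _)

lemma crossRatioConjugates_subset_F8 (ha : a ∈ F8 K) : crossRatioConjugates a ⊆ F8 K := by
  have ha1 : a + 1 ∈ F8 K := add_one_mem_F8_iff.2 ha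
  rintro _ (rfl | rfl | rfl | rfl | rfl | rfl)
  exacts [ha, ha1, div_mem (one_mem _) ha, div_mem ha1 ha, div_mem (one_mem _) ha1, div_mem ha ha1]

lemma mem_F8_of_cubic (ha : a ^ 3 + a + 1 = 0 ∨ a ^ 3 + a ^ 2 + 1 = 0) : a ∈ F8 K := by
  have : (2 : K) = 0 := CharTwo.two_eq_zero
  rw [mem_F8]
  rcases ha with ha | ha <;> grind

lemma mem_F8_of_div_mem_crossRatioConjugates (ha0 : a ≠ 0) (ha1 : a + 1 ≠ 0)
    (haF4 : a ^ 2 + a + 1 ≠ 0) (hb : b = 1 / a ∨ b = 1 / (a + 1))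
    (hba : b / a ∈ crossRatioConjugates a) : a ∈ F8 K := by
  have : (2 : K) = 0 := CharTwo.two_eq_zero
  apply mem_F8_of_cubic
  -- Each of the twelve equations is one of the two cubics, or says that a product of factors `a`,
  -- `a + 1`, `a ^ 2 + a + 1` vanishes.
  rcases hb with rfl | rfl <;> rcases hba with hba | hba | hba | hba | hba | hba <;>
    field_simp at hba <;> grind

lemma mem_F8_of_mem_crossRatioConjugates (ha0 : a ≠ 0) (ha1 : a + 1 ≠ 0)
    (haF4 : a ^ 2 + a + 1 ≠ 0) (hab : a ≠ b) (hab1 : b ≠ a + 1)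
    (hb : b ∈ crossRatioConjugates a) (hba : b / a ∈ crossRatioConjugates a)
    (hba1 : (b + 1) / (a + 1) ∈ crossRatioConjugates a) : a ∈ F8 K := by
  have : (2 : K) = 0 := CharTwo.two_eq_zero
  have haa : a + 1 + 1 = a := CharTwo.add_cancel_right a 1
  have of_add_one (hb1 : b + 1 = 1 / (a + 1) ∨ b + 1 = 1 / a) : a ∈ F8 K := by
    rw [← crossRatioConjugates_add_one] at hba1
    rw [← add_one_mem_F8_iff]
    exact mem_F8_of_div_mem_crossRatioConjugates ha1 (by rwa [haa])
      (by convert haF4 using 1; grind) (by rwa [haa]) hba1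
  rcases hb with hb | hb | hb | hb | hb | hb
  · exact absurd hb.symm hab
  · exact absurd hb hab1
  · exact mem_F8_of_div_mem_crossRatioConjugates ha0 ha1 haF4 (.inl hb) hba
  · refine of_add_one (.inr ?_)
    field_simp at hb ⊢
    grind
  · exact mem_F8_of_div_mem_crossRatioConjugates ha0 ha1 haF4 (.inr hb) hba
  · refine of_add_one (.inl ?_)
    field_simp at hb ⊢
    grind

end FieldOfOrderEight

section OrderFourDual

variable [CharP K 2] {h : ℕ} {S T : AddSubgroup K} {F : Subfield K} {a b c g γ : K}

lemma trDual_le_smulSub_subfield (ha : a ∈ F)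
    (hW : (trDual h S : Set K) = {0, g, a * g, g + a * g}) :
    trDual h S ≤ smulSub g F.toAddSubgroup := by
  have hg : g ∈ smulSub g F.toAddSubgroup := ⟨1, one_mem F, mul_one g⟩
  have hag : a * g ∈ smulSub g F.toAddSubgroup := ⟨a, ha, mul_comm g a⟩
  rw [← SetLike.coe_subset_coe, hW]
  rintro _ (rfl | rfl | rfl | rfl)
  exacts [zero_mem _, hg, hag, add_mem hg hag]

lemma smulSub_subfield_eq_of_coe_eq (hW : trDual h S ≤ smulSub g F.toAddSubgroup) (hST : S ≤ T)
    (hT : T ≠ ⊤) (hγ : (T : Set K) = {x | Tr h (γ * x) = 0}) :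
    smulSub γ F.toAddSubgroup = smulSub g F.toAddSubgroup := by
  have mem_T (x : K) : x ∈ T ↔ Tr h (γ * x) = 0 := Set.ext_iff.1 hγ x
  have hγ0 : γ ≠ 0 := by
    rintro rfl
    exact hT ((AddSubgroup.eq_top_iff' T).2 fun x => (mem_T x).2 (by rw [zero_mul, Tr_zero]))
  have hγW : γ ∈ trDual h S := fun x hx => by
    rw [mul_comm]
    exact (mem_T x).1 (hST hx)
  exact smulSub_subfield_eq_of_mem (hW hγW) hγ0

variable [Finite K]

lemma card_subfield_mul_card_trDual_smulSub (hK : Nat.card K = 2 ^ h) (hg : g ≠ 0) :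
    Nat.card F * Nat.card (trDual h (smulSub g F.toAddSubgroup)) = 2 ^ h := by
  rw [← card_mul_card_trDual (S := smulSub g F.toAddSubgroup) hK, card_smulSub hg]
  rfl

lemma exists_coe_trDual_eq (hK : Nat.card K = 2 ^ h) (hS : 4 * Nat.card S = 2 ^ h)
    (hsup : Nat.card (S ⊔ smulSub a S : AddSubgroup K) = 2 * Nat.card S) :
    ∃ g ≠ 0, (trDual h S : Set K) = {0, g, a * g, g + a * g} := by
  have hsup : Nat.card (smulSub 1 S ⊔ smulSub a S : AddSubgroup K) = 2 * Nat.card S := by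
    rwa [smulSub_one]
  have hW : Nat.card (trDual h S) = 4 := by
    have hcard := card_mul_card_trDual (S := S) hK
    rw [← hS, mul_comm 4] at hcard
    exact Nat.eq_of_mul_eq_mul_left Nat.card_pos hcard
  obtain ⟨-, ha0, ha1⟩ := ne_zero_and_ne_of_card_sup_eq hsup
  obtain ⟨g, hg, hgW, hagW⟩ :=
    exists_ne_zero_mul_mem_trDual hK (ne_top_of_card_eq_two_mul hK hS hsup)
  rw [one_mul] at hgW
  have hsum : g + a * g ≠ 0 := by
    rw [← one_add_mul]
    exact mul_ne_zero (fun h0 => ha1 (CharTwo.add_eq_zero.1 h0)) hg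
  exact ⟨g, hg, coe_eq_of_card_eq_four hW hgW hagW hg (mul_ne_zero ha0 hg)
    (fun heq => hsum (CharTwo.add_eq_zero.2 heq)) hsum⟩

lemma mem_iff_Tr_eq_zero (hK : Nat.card K = 2 ^ h)
    (hW : (trDual h S : Set K) = {0, g, a * g, g + a * g}) {x : K} :
    x ∈ S ↔ Tr h (g * x) = 0 ∧ Tr h (a * g * x) = 0 := by
  rw [← trDual_trDual (S := S) hK, mem_trDual]
  simp_rw [← SetLike.mem_coe (p := trDual h S), hW]
  simp only [Set.mem_insert_iff, Set.mem_singleton_iff, forall_eq_or_imp, forall_eq, add_mul,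
    Tr_add, zero_mul, Tr_zero, true_and]
  constructor
  · rintro ⟨hg, hag, -⟩
    exact ⟨hg, hag⟩
  · rintro ⟨hg, hag⟩
    exact ⟨hg, hag, by rw [hg, hag, add_zero]⟩

lemma sq_add_self_add_one_ne_zero (hK : Nat.card K = 2 ^ h)
    (hW : (trDual h S : Set K) = {0, g, a * g, g + a * g}) (hsup : S ⊔ smulSub a S ≠ S) :
    a ^ 2 + a + 1 ≠ 0 := by
  intro hF4
  have two_eq_zero : (2 : K) = 0 := CharTwo.two_eq_zero
  refine hsup (sup_eq_left.2 ?_)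
  rintro _ ⟨s, hs, rfl⟩
  obtain ⟨hgs, hags⟩ := (mem_iff_Tr_eq_zero hK hW).1 hs
  refine (mem_iff_Tr_eq_zero hK hW).2 ⟨?_, ?_⟩
  · rw [← hags]
    congr 1
    exact mul_left_comm g a s |>.trans (mul_assoc a g s).symm
  · have hsq : a * g * (a * s) = a * g * s + g * s := by
      linear_combination g * s * hF4 - (a + 1) * g * s * two_eq_zero
    change Tr h (a * g * (a * s)) = 0
    rw [hsq, Tr_add, hgs, hags, add_zero]

lemma div_mem_crossRatioConjugates_of_card_sup_eq (hK : Nat.card K = 2 ^ h)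
    (hS : 4 * Nat.card S = 2 ^ h) (hW : (trDual h S : Set K) = {0, g, a * g, g + a * g})
    (hsup : Nat.card (smulSub b S ⊔ smulSub c S : AddSubgroup K) = 2 * Nat.card S) :
    c / b ∈ crossRatioConjugates a := by
  obtain ⟨hb, hc, hbc⟩ := ne_zero_and_ne_of_card_sup_eq hsup
  obtain ⟨w, hw, hbw, hcw⟩ :=
    exists_ne_zero_mul_mem_trDual hK (ne_top_of_card_eq_two_mul hK hS hsup)
  rw [← SetLike.mem_coe, hW] at hbw hcw
  rw [← mul_div_mul_right c b hw]
  exact div_mem_crossRatioConjugates hbw hcw (mul_ne_zero hb hw) (mul_ne_zero hc hw)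
    (fun heq => hbc (mul_right_cancel₀ hw heq))

lemma mem_F8_of_card_sup_eq (hK : Nat.card K = 2 ^ h) (hS : 4 * Nat.card S = 2 ^ h)
    (hW : (trDual h S : Set K) = {0, g, a * g, g + a * g})
    (h1a : Nat.card (S ⊔ smulSub a S : AddSubgroup K) = 2 * Nat.card S)
    (h1b : Nat.card (S ⊔ smulSub b S : AddSubgroup K) = 2 * Nat.card S)
    (hab : Nat.card (smulSub a S ⊔ smulSub b S : AddSubgroup K) = 2 * Nat.card S)
    (hab1 : Nat.card (smulSub (a + 1) S ⊔ smulSub (b + 1) S : AddSubgroup K) = 2 * Nat.card S)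
    (hne : b ≠ a + 1) : a ∈ F8 K ∧ b ∈ F8 K := by
  obtain ⟨ha0, -, ha_ne_b⟩ := ne_zero_and_ne_of_card_sup_eq hab
  obtain ⟨ha1, -, -⟩ := ne_zero_and_ne_of_card_sup_eq hab1
  have hSpos : 0 < Nat.card S := Nat.card_pos
  have haF4 : a ^ 2 + a + 1 ≠ 0 := sq_add_self_add_one_ne_zero hK hW fun hsup => by
    rw [hsup] at h1a
    omega
  have hb : b ∈ crossRatioConjugates a := by
    rw [← div_one b]
    exact div_mem_crossRatioConjugates_of_card_sup_eq hK hS hW (by rwa [smulSub_one])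
  have ha : a ∈ F8 K := mem_F8_of_mem_crossRatioConjugates ha0 ha1 haF4 ha_ne_b hne hb
    (div_mem_crossRatioConjugates_of_card_sup_eq hK hS hW hab)
    (div_mem_crossRatioConjugates_of_card_sup_eq hK hS hW hab1)
  exact ⟨ha, crossRatioConjugates_subset_F8 ha hb⟩

lemma trDual_smulSub_subfield_le (hK : Nat.card K = 2 ^ h) (hg : g ≠ 0)
    (hW : trDual h S ≤ smulSub g F.toAddSubgroup) (hc : c ∈ F) (hc0 : c ≠ 0) :
    trDual h (smulSub g F.toAddSubgroup) ≤ smulSub c S := by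
  have hscale : smulSub c⁻¹ (smulSub g F.toAddSubgroup) = smulSub g F.toAddSubgroup := by
    rw [smulSub_smulSub]
    exact smulSub_subfield_eq_of_mem ⟨c⁻¹, F.inv_mem hc, mul_comm g c⁻¹⟩
      (mul_ne_zero (inv_ne_zero hc0) hg)
  calc trDual h (smulSub g F.toAddSubgroup)
      = smulSub c (trDual h (smulSub g F.toAddSubgroup)) := by
        conv_lhs => rw [← hscale, trDual_smulSub (inv_ne_zero hc0), inv_inv]
    _ ≤ smulSub c (trDual h (trDual h S)) := smulSub_mono (trDual_anti hW)
    _ = smulSub c S := by rw [trDual_trDual hK]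

lemma trDual_smulSub_subfield_le_inf (hK : Nat.card K = 2 ^ h) (hg : g ≠ 0)
    (hW : trDual h S ≤ smulSub g F.toAddSubgroup) (ha : a ∈ F) (hb : b ∈ F)
    (ha0 : a ≠ 0) (hb0 : b ≠ 0) (ha1 : a + 1 ≠ 0) (hb1 : b + 1 ≠ 0) :
    trDual h (smulSub g F.toAddSubgroup) ≤
      S ⊓ smulSub a S ⊓ smulSub b S ⊓ smulSub (a + 1) S ⊓ smulSub (b + 1) S := by
  have le_smulSub {c : K} (hc : c ∈ F) (hc0 : c ≠ 0) :
      trDual h (smulSub g F.toAddSubgroup) ≤ smulSub c S :=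
    trDual_smulSub_subfield_le hK hg hW hc hc0
  have h1 : trDual h (smulSub g F.toAddSubgroup) ≤ S := by
    simpa only [smulSub_one] using le_smulSub (one_mem F) one_ne_zero
  simp only [le_inf_iff]
  exact ⟨⟨⟨⟨h1, le_smulSub ha ha0⟩, le_smulSub hb hb0⟩,
    le_smulSub (add_mem ha (one_mem F)) ha1⟩, le_smulSub (add_mem hb (one_mem F)) hb1⟩

lemma card_F8_eq_and_eq_trDual (hK : Nat.card K = 2 ^ h) (hS : 4 * Nat.card S = 2 ^ h)
    (ha : a ≠ 0) (hsup : Nat.card (S ⊔ smulSub a S : AddSubgroup K) = 2 * Nat.card S)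
    (hg : g ≠ 0) {J : AddSubgroup K} (hJ : J ≤ S ⊓ smulSub a S)
    (hFJ : trDual h (smulSub g (F8 K).toAddSubgroup) ≤ J) :
    Nat.card (F8 K) = 8 ∧ J = trDual h (smulSub g (F8 K).toAddSubgroup) := by
  set D := trDual h (smulSub g (F8 K).toAddSubgroup)
  have hinf : 8 * Nat.card (S ⊓ smulSub a S : AddSubgroup K) = 2 ^ h := by
    have hprod := card_inf_mul_card_sup S (smulSub a S)
    rw [hsup, card_smulSub ha, ← mul_assoc] at hprod
    have := Nat.eq_of_mul_eq_mul_right Nat.card_pos hprod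
    omega
  have hF8 : Nat.card (F8 K) * Nat.card D = 2 ^ h := card_subfield_mul_card_trDual_smulSub hK hg
  have hF8_le : Nat.card (F8 K) ≤ 8 := card_frobeniusFixedSubfield_le one_lt_two three_ne_zero
  have eight_mul_card_J_le : 8 * Nat.card J ≤ Nat.card (F8 K) * Nat.card D := by
    rw [hF8, ← hinf]
    exact Nat.mul_le_mul_left 8 (AddSubgroup.card_le_of_le hJ)
  have hJD : J = D := (AddSubgroup.eq_of_le_of_card_ge hFJ <| Nat.le_of_mul_le_mul_left
    (eight_mul_card_J_le.trans (Nat.mul_le_mul_right _ hF8_le)) (by norm_num)).symm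
  rw [hJD] at eight_mul_card_J_le
  exact ⟨hF8_le.antisymm (Nat.le_of_mul_le_mul_right eight_mul_card_J_le Nat.card_pos), hJD⟩

end OrderFourDual

lemma dvd_of_card_subfield_eq_pow [Finite K] {F : Subfield K} {p m n : ℕ} (hp : 1 < p)
    (hF : Nat.card F = p ^ m) (hK : Nat.card K = p ^ n) : m ∣ n := by
  have hcard := Module.natCard_eq_pow_finrank (K := F) (V := K)
  rw [hF, hK, ← pow_mul] at hcard
  exact ⟨_, Nat.pow_right_injective hp hcard⟩


lemma pow_mul_eq_pow_of_eq_div {p m n k : ℕ} (hp : 1 < p) (hk : k = p ^ n / p ^ m)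
    (hpos : 0 < k) : p ^ m * k = p ^ n := by
  subst hk
  have hmn : m ≤ n := (Nat.pow_le_pow_iff_right hp).1 (Nat.div_pos_iff.1 hpos).2
  exact Nat.mul_div_cancel' (pow_dvd_pow p hmn)

/-- Lemma 3.7: if `S + αS`, `S + βS`, `αS + βS` and `(α+1)S + (β+1)S`
all have order `q/2`, then either `β = α+1` and `S` is cut out by traces `γ, αγ`,
or `3 ∣ h`, `α, β ∈ F₈`, and the intersection `S ∩ αS ∩ βS ∩ (α+1)S ∩ (β+1)S` has order
`q/8`; moreover in the latter case this intersection is `{x | ∀ y ∈ F₈, Tr(xyγ) = 0}`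
whenever `S + αS = {x | Tr(γx) = 0}`. -/
theorem lemma_OKofF8
    {K : Type*} [Field K] [Fintype K] (h : ℕ)
    (hcard : Fintype.card K = 2 ^ h)
    (S : AddSubgroup K) (hS : Nat.card S = 2 ^ h / 4) (α β : K)
    (h1 : Nat.card (S ⊔ smulSub α S : AddSubgroup K) = 2 ^ h / 2)
    (h2 : Nat.card (S ⊔ smulSub β S : AddSubgroup K) = 2 ^ h / 2)
    (h3 : Nat.card (smulSub α S ⊔ smulSub β S : AddSubgroup K) = 2 ^ h / 2)
    (h4 : Nat.card (smulSub (α + 1) S ⊔ smulSub (β + 1) S : AddSubgroup K) = 2 ^ h / 2) :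
    (β = α + 1 ∧
      ∃ γ : K, (S : Set K) = {x : K | Tr h (γ * x) = 0 ∧ Tr h (α * γ * x) = 0}) ∨
    (3 ∣ h ∧ α ^ 8 = α ∧ β ^ 8 = β ∧
      Nat.card (S ⊓ smulSub α S ⊓ smulSub β S ⊓ smulSub (α + 1) S ⊓ smulSub (β + 1) S :
        AddSubgroup K) = 2 ^ h / 8 ∧
      ∀ γ : K, ((S ⊔ smulSub α S : AddSubgroup K) : Set K) = {x : K | Tr h (γ * x) = 0} →
        ((S ⊓ smulSub α S ⊓ smulSub β S ⊓ smulSub (α + 1) S ⊓ smulSub (β + 1) S :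
            AddSubgroup K) : Set K)
          = {x : K | ∀ y : K, y ^ 8 = y → Tr h (x * y * γ) = 0}) := by
  have : CharP K 2 := charP_of_card_eq_prime_pow hcard
  have hK : Nat.card K = 2 ^ h := Nat.card_eq_fintype_card.trans hcard
  have hS4 : 4 * Nat.card S = 2 ^ h :=
    pow_mul_eq_pow_of_eq_div (m := 2) one_lt_two hS Nat.card_pos
  rw [show 2 ^ h / 2 = 2 * Nat.card S by omega] at h1 h2 h3 h4
  obtain ⟨hα, hβ, -⟩ := ne_zero_and_ne_of_card_sup_eq h3
  obtain ⟨hα1, hβ1, -⟩ := ne_zero_and_ne_of_card_sup_eq h4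
  obtain ⟨g, hg, hW⟩ := exists_coe_trDual_eq hK hS4 h1
  by_cases hβα : β = α + 1
  · exact .inl ⟨hβα, g, Set.ext fun _ => mem_iff_Tr_eq_zero hK hW⟩
  obtain ⟨hα8, hβ8⟩ := mem_F8_of_card_sup_eq hK hS4 hW h1 h2 h3 h4 hβα
  have hW8 := trDual_le_smulSub_subfield hα8 hW
  obtain ⟨hF8, hJ⟩ := card_F8_eq_and_eq_trDual hK hS4 hα h1 hg
    (inf_le_left.trans (inf_le_left.trans inf_le_left))
    (trDual_smulSub_subfield_le_inf hK hg hW8 hα8 hβ8 hα hβ hα1 hβ1)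
  have hJ8 := card_subfield_mul_card_trDual_smulSub (F := F8 K) hK hg
  rw [hF8, ← hJ] at hJ8
  refine .inr ⟨dvd_of_card_subfield_eq_pow (m := 3) one_lt_two hF8 hK, hα8, hβ8, by omega, ?_⟩
  intro γ hγ
  rw [hJ, ← smulSub_subfield_eq_of_coe_eq hW8 le_sup_left (ne_top_of_card_eq_two_mul hK hS4 h1) hγ]
  exact Set.ext fun _ => mem_trDual_smulSub
end
end

section
/- Let q = 2^h with h ≥ 4, let S be a subgroup of (F_q,+) of order q/4, let α, β, α', β' ∈ F_q, and let W be a subset of F_q with |W| = q/4. Suppose that the point set A = {(0:1:w) : w ∈ W} ∪ {(1:0:s) : s ∈ S} ∪ {(1:1:1+s) : s ∈ S} ∪ {(1:α:α'+s) : s ∈ S} ∪ {(1:β:β'+s) : s ∈ S} is a KM-arc of type q/4 in PG(2,q). Then β = α + 1 and there exists μ ∈ F_q with S = {x ∈ F_q : Tr(μx) = 0 and Tr(αμx) = 0}. In particular the five q/4-secants of A are the lines X = 0, Y = 0, Y = X, Y = αX and Y = (α+1)X, whose slope set {0, 1, α, α+1} is an F_2-subspace of F_q; thus the q/4-secants of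 A form an F_2-linear pencil with head the line X = 0. -/
open scoped Classical

noncomputable section

variable {K : Type*} [Field K]

/-!
Write the given set as `W` on the line `X = 0` together with cosets `zᵢ + S` on the four lines
`Y = yᵢX`. A line `Z = aX + wY` meets it in as many points as there are indices `i` with
`zᵢ - w yᵢ ≡ a` modulo `S`, plus one if `w ∈ W`. Counting over all lines through a fixed point of
the set shows that this number is never `q/4`, hence is `0` or `2`.

Fix `w`. The classes of the four elements `zᵢ - w yᵢ` in `K/S`, a group of order four and
exponent two, are therefore either pairwise distinct or form two pairs of equal ones, and their
sum vanishes both times: `∑ zᵢ - w ∑ yᵢ ∈ S` for every `w`. As `S ≠ K`, this forces `∑ yᵢ = 0`,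
that is, `β = α + 1`.

Moreover no three of the four classes coincide. For the slopes `0, 1, α` this means that no `w`
satisfies both `w - 1 ∈ S` and `αw - α' ∈ S`, so that `S + α⁻¹S ≠ K` and some `ν ≠ 0` has
`Tr(νx) = 0` on `S + α⁻¹S`. Then `μ = α⁻¹ν` works: `S` is contained in the trace orthogonal of
`⟨μ, αμ⟩`, and both have codimension two.
-/

open Module Projectivization

section Trace

lemma mem_orthogonal_span_pair_iff {R M : Type*} [CommSemiring R] [AddCommMonoid M] [Module R M]
    {B : LinearMap.BilinForm R M} {u v x : M} :
    x ∈ B.orthogonal (Submodule.span R {u, v}) ↔ B u x = 0 ∧ B v x = 0 := by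
  rw [LinearMap.BilinForm.mem_orthogonal_iff]
  constructor
  · exact fun h => ⟨h u (Submodule.subset_span (.inl rfl)), h v (Submodule.subset_span (.inr rfl))⟩
  · rintro ⟨hu, hv⟩ n hn
    obtain ⟨a, b, rfl⟩ := Submodule.mem_span_pair.1 hn
    simp only [map_add, map_smul, LinearMap.add_apply, LinearMap.smul_apply, hu, hv, smul_zero,
      add_zero]

variable {F L : Type*} [Field F] [Field L] [Algebra F L]

lemma finrank_span_pair_mul {α μ : L} (hα : α ∉ (algebraMap F L).range) (hμ : μ ≠ 0) :
    finrank F (Submodule.span F {μ, α * μ}) = 2 := by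
  have hind : LinearIndependent F ![μ, α * μ] := by
    refine (LinearIndependent.pair_iff' hμ).2 fun a ha => hα ⟨a, ?_⟩
    rw [Algebra.smul_def] at ha
    exact mul_right_cancel₀ hμ ha
  rw [← Matrix.range_cons_cons_empty, finrank_span_eq_card hind, Fintype.card_fin]

variable [FiniteDimensional F L] [Algebra.IsSeparable F L]

lemma exists_ne_zero_forall_trace_mul_eq_zero {T : Submodule F L} (hT : T ≠ ⊤) :
    ∃ μ ≠ 0, ∀ x ∈ T, Algebra.trace F L (μ * x) = 0 := by
  obtain ⟨f, hf, hTf⟩ := Submodule.exists_le_ker_of_lt_top T hT.lt_top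
  obtain ⟨μ, rfl⟩ := (LinearMap.BilinForm.toDual _ (traceForm_nondegenerate F L)).surjective f
  exact ⟨μ, fun hμ => hf (by rw [hμ, map_zero]), fun x hx => hTf hx⟩

lemma exists_mem_iff_trace_mul_eq_zero {S : Submodule F L} (hS : finrank F S + 2 = finrank F L)
    {α : L} (hα : α ∉ (algebraMap F L).range) {c d : L}
    (hcd : ∀ w, ¬(w - c ∈ S ∧ α * w - d ∈ S)) :
    ∃ μ, ∀ x, x ∈ S ↔ Algebra.trace F L (μ * x) = 0 ∧ Algebra.trace F L (α * μ * x) = 0 := by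
  have hα0 : α ≠ 0 := fun h => hα ⟨0, by rw [map_zero, h]⟩
  have hproper : S ⊔ S.comap (LinearMap.mulLeft F α) ≠ ⊤ := fun htop => by
    obtain ⟨s, hs, u, hu, hsu⟩ := Submodule.mem_sup.1 (htop ▸ Submodule.mem_top : c - d / α ∈ _)
    refine hcd (c - s) ⟨by simpa using hs, ?_⟩
    have hαu : α * (c - s) - d = α * u := by
      rw [eq_sub_of_add_eq' hsu, mul_sub, mul_sub, mul_sub, mul_div_cancel₀ d hα0]
      ring
    exact hαu ▸ hu
  obtain ⟨ν, hν, hνS⟩ := exists_ne_zero_forall_trace_mul_eq_zero hproper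
  refine ⟨α⁻¹ * ν, fun x => ?_⟩
  have hle : S ≤ (Algebra.traceForm F L).orthogonal
      (Submodule.span F {α⁻¹ * ν, α * (α⁻¹ * ν)}) := fun s hs => by
    rw [mem_orthogonal_span_pair_iff, Algebra.traceForm_apply, Algebra.traceForm_apply,
      mul_inv_cancel_left₀ hα0, mul_comm α⁻¹, mul_assoc]
    refine ⟨hνS _ (Submodule.mem_sup_right ?_), hνS _ (Submodule.mem_sup_left hs)⟩
    simpa [hα0] using hs
  have hrank := LinearMap.BilinForm.finrank_orthogonal (traceForm_nondegenerate F L)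
    (Submodule.span F {α⁻¹ * ν, α * (α⁻¹ * ν)})
  rw [finrank_span_pair_mul hα (mul_ne_zero (inv_ne_zero hα0) hν)] at hrank
  rw [← Algebra.traceForm_apply, ← Algebra.traceForm_apply, ← mem_orthogonal_span_pair_iff,
    ← Submodule.eq_of_le_of_finrank_le hle (by omega)]

end Trace

section ElementaryAbelian

variable {V : Type*} [AddCommGroup V]

lemma sum_eq_zero_of_even_card_fibers {ι : Type*} [Fintype ι] (hV : ∀ v : V, v + v = 0)
    {e : ι → V} (he : ∀ v, Even (Finset.card {i | e i = v})) : ∑ i, e i = 0 := by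
  have hsum := Finset.sum_comp (s := Finset.univ) (fun v : V => v) e
  rw [hsum]
  refine Finset.sum_eq_zero fun v _ => ?_
  obtain ⟨m, hm⟩ := he v
  rw [hm, add_nsmul, hV]

lemma sum_fin_four_eq_zero_of_bijective (hV : ∀ v : V, v + v = 0) {e : Fin 4 → V}
    (he : Function.Bijective e) : ∑ i, e i = 0 := by
  have hne {i j : Fin 4} (hij : i ≠ j) : e i + e j ≠ 0 := fun h0 =>
    hij (he.1 (add_right_cancel (h0.trans (hV (e j)).symm)))
  obtain ⟨k, hk⟩ := he.2 (e 0 + e 1 + e 2)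
  obtain rfl : k = 3 := by
    fin_cases k
    · exact absurd (left_eq_add.1 (hk.trans (add_assoc _ _ _))) (hne (by decide : (1 : Fin 4) ≠ 2))
    · exact absurd (right_eq_add.1 (hk.trans (add_right_comm _ _ _)))
        (hne (by decide : (0 : Fin 4) ≠ 2))
    · exact absurd (right_eq_add.1 hk) (hne (by decide : (0 : Fin 4) ≠ 1))
    · rfl
  rw [Fin.sum_univ_four, ← hk, hV]

lemma sum_fin_four_eq_zero_of_card_fibers (hV : ∀ v : V, v + v = 0) {e : Fin 4 → V} {c : ℕ}
    (he : ∀ v, c + Finset.card {i | e i = v} = 0 ∨ c + Finset.card {i | e i = v} = 2) :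
    ∑ i, e i = 0 := by
  have hpos : 0 < Finset.card {i | e i = e 0} := Finset.card_pos.2 ⟨0, by simp⟩
  obtain rfl | rfl : c = 0 ∨ c = 1 := by have := he (e 0); omega
  · refine sum_eq_zero_of_even_card_fibers hV fun v => ?_
    rcases he v with h | h <;> rw [zero_add] at h <;> simp [h]
  · refine sum_fin_four_eq_zero_of_bijective hV <|
      (Function.bijective_iff_existsUnique e).2 fun v => ?_
    obtain ⟨i, hi⟩ := Finset.card_eq_one.1 (show Finset.card {i | e i = v} = 1 by
      have := he v; omega)
    refine ⟨i, ?_, fun j hj => ?_⟩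
    · simpa using (hi ▸ Finset.mem_singleton_self i : i ∈ ({i | e i = v} : Finset (Fin 4)))
    · simpa [hj] using Finset.ext_iff.1 hi j

end ElementaryAbelian

section Counting

lemma eq_of_le_of_sum_eq_card_mul {κ : Type*} [Fintype κ] {f : κ → ℕ} {c : ℕ}
    (hle : ∀ x, c ≤ f x) (hsum : ∑ x, f x = Fintype.card κ * c) (x : κ) : f x = c := by
  have hconst : ∑ _x : κ, c = ∑ x, f x := by simp [hsum]
  exact ((Finset.sum_eq_sum_iff_of_le fun i _ => hle i).1 hconst x (Finset.mem_univ x)).symm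

lemma sum_card_filter_comm {κ ι : Type*} [Fintype κ] [Fintype ι] (r : κ → ι → Prop) :
    ∑ x, Finset.card {i | r x i} = ∑ i, Finset.card {x | r x i} :=
  Finset.sum_card_bipartiteAbove_eq_sum_card_bipartiteBelow r

lemma card_filter_affine_mem [Fintype K] (T : Set K) {c : K} (hc : c ≠ 0) (d : K) :
    Finset.card {x | c * x + d ∈ T} = Nat.card T := by
  have hbij : Function.Bijective fun x : K => c * x + d :=
    Finite.injective_iff_bijective.1 fun x y hxy => by simpa [hc] using hxy
  rw [Finset.card_filter, hbij.sum_comp fun x => if x ∈ T then 1 else 0, ← Finset.card_filter,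
    Nat.card_eq_fintype_card, Fintype.card_subtype]

lemma eq_zero_of_forall_mul_add_mem {S : AddSubgroup K} (hS : S ≠ ⊤) {c d : K}
    (h : ∀ w, w * c + d ∈ S) : c = 0 := by
  by_contra hc
  refine hS ((AddSubgroup.eq_top_iff' S).2 fun x => ?_)
  simpa [hc] using S.sub_mem (h (x / c)) (h 0)

end Counting

section Lines

lemma onLine_pt3 (a b c : K) (habc) (L : Submodule K (Fin 3 → K)) :
    OnLine (pt3 a b c habc) L ↔ ![a, b, c] ∈ L := by
  rw [OnLine, pt3, submodule_mk, Submodule.span_singleton_le_iff_mem]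

/-- The line `Z = aX + wY`. -/
def lineZaXwY (a w : K) : Submodule K (Fin 3 → K) :=
  LinearMap.ker (dotProductEquiv K (Fin 3) ![a, w, -1])

lemma mem_lineX0 {v : Fin 3 → K} : v ∈ lineX0 K ↔ v 0 = 0 := Iff.rfl

lemma mem_lineYaX {a : K} {v : Fin 3 → K} : v ∈ lineYaX a ↔ v 1 = a * v 0 := Iff.rfl

lemma mem_lineZaXwY {a w : K} {v : Fin 3 → K} :
    v ∈ lineZaXwY a w ↔ v 2 = a * v 0 + w * v 1 := by
  rw [lineZaXwY, LinearMap.mem_ker, dotProductEquiv_apply_apply, dotProduct, Fin.sum_univ_three]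
  simp only [Matrix.cons_val]
  grind

lemma isLine_ker_dotProductEquiv {c : Fin 3 → K} (hc : c ≠ 0) :
    IsLine (LinearMap.ker (dotProductEquiv K (Fin 3) c)) := by
  have hrank := Dual.finrank_ker_add_one_of_ne_zero
    ((dotProductEquiv K (Fin 3)).map_ne_zero_iff.2 hc)
  rw [finrank_fin_fun] at hrank
  exact Nat.succ_injective hrank

lemma isLine_lineYaX (a : K) : IsLine (lineYaX a) := by
  have hker : lineYaX a = LinearMap.ker (dotProductEquiv K (Fin 3) ![a, -1, 0]) := by
    ext v
    rw [mem_lineYaX, LinearMap.mem_ker, dotProductEquiv_apply_apply, dotProduct,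
      Fin.sum_univ_three]
    simp only [Matrix.cons_val]
    grind
  exact hker ▸ isLine_ker_dotProductEquiv fun h => by simpa using congrFun h 1

lemma isLine_lineZaXwY (a w : K) : IsLine (lineZaXwY a w) :=
  isLine_ker_dotProductEquiv fun h => by simpa using congrFun h 2

lemma exists_eq_ker_dotProductEquiv_of_isLine {L : Submodule K (Fin 3 → K)} (hL : IsLine L) :
    ∃ c ≠ 0, L = LinearMap.ker (dotProductEquiv K (Fin 3) c) := by
  have hne : L ≠ ⊤ := by
    rintro rfl
    rw [IsLine, finrank_top, finrank_fin_fun] at hL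
    omega
  obtain ⟨f, hf, hle⟩ := Submodule.exists_le_ker_of_lt_top L hne.lt_top
  obtain ⟨c, rfl⟩ := (dotProductEquiv K (Fin 3)).surjective f
  have hc := (dotProductEquiv K (Fin 3)).map_ne_zero_iff.1 hf
  exact ⟨c, hc, Submodule.eq_of_le_of_finrank_eq hle
    (hL.trans (isLine_ker_dotProductEquiv hc).symm)⟩

lemma eq_lineX0_or_lineYaX_or_lineZaXwY_of_isLine {L : Submodule K (Fin 3 → K)} (hL : IsLine L) :
    L = lineX0 K ∨ (∃ a, L = lineYaX a) ∨ ∃ a w, L = lineZaXwY a w := by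
  obtain ⟨c, hc, rfl⟩ := exists_eq_ker_dotProductEquiv_of_isLine hL
  have hmem (v : Fin 3 → K) : v ∈ LinearMap.ker (dotProductEquiv K (Fin 3) c) ↔
      c 0 * v 0 + c 1 * v 1 + c 2 * v 2 = 0 := by
    rw [LinearMap.mem_ker, dotProductEquiv_apply_apply, dotProduct, Fin.sum_univ_three]
  by_cases h2 : c 2 = 0
  · by_cases h1 : c 1 = 0
    · have h0 : c 0 ≠ 0 := fun h0 => hc (by ext i; fin_cases i <;> assumption)
      refine .inl (Submodule.ext fun v => ?_)
      simp [hmem, mem_lineX0, h0, h1, h2]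
    · refine .inr (.inl ⟨-c 0 / c 1, Submodule.ext fun v => ?_⟩)
      rw [hmem, mem_lineYaX, h2]
      grind
  · refine .inr (.inr ⟨-c 0 / c 2, -c 1 / c 2, Submodule.ext fun v => ?_⟩)
    rw [hmem, mem_lineZaXwY]
    grind

lemma secantCount_range {κ : Type*} {φ : κ → Pt K} (hφ : φ.Injective)
    (L : Submodule K (Fin 3 → K)) :
    secantCount (Set.range φ) L = Nat.card {p // OnLine (φ p) L} := by
  have himage : {P ∈ Set.range φ | OnLine P L} = φ '' {p | OnLine (φ p) L} := by
    ext P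
    simp only [Set.mem_ofPred_eq, Set.mem_range, Set.mem_image]
    grind
  rw [secantCount, himage, Set.ncard_image_of_injective _ hφ, ← Nat.card_coe_set_eq]
  rfl

end Lines

section PencilSet

variable {ι : Type*} {W : Set K} {S : AddSubgroup K} {y z : ι → K}

/-- The points `(0 : 1 : w)` with `w ∈ W` on the line `X = 0` together with, for each `i`, the
points `(1 : y i : z i + s)` with `s ∈ S` on the line `Y = y i X`, as an indexed family. -/
def pencilPoint (W : Set K) (S : AddSubgroup K) (y z : ι → K) : W ⊕ ι × S → Pt K
  | .inl w => pt3 0 1 w (by simp)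
  | .inr (i, s) => pt3 1 (y i) (z i + s) (by simp)

/-- The point set consisting of a copy of `W` on the line `X = 0` and, for each `i`, a copy of the
coset `z i + S` on the line `Y = y i X`; all these lines pass through `(0 : 0 : 1)`. -/
def pencilSet (W : Set K) (S : AddSubgroup K) (y z : ι → K) : Set (Pt K) :=
  Set.range (pencilPoint W S y z)

/-- The number of indices `i` such that the line `Z = aX + wY` meets the coset `z i + S` carried by
the line `Y = y i X`, increased by one if it meets the copy of `W` carried by `X = 0`. -/
def pencilCount [Fintype ι] (W : Set K) (S : AddSubgroup K) (y z : ι → K) (a w : K) : ℕ :=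
  (if w ∈ W then 1 else 0) + Finset.card {i | a + w * y i - z i ∈ S}

variable [Finite K]

lemma pencilPoint_injective_of_ncard_eq [Fintype ι] (hcard : (pencilSet W S y z).ncard =
    W.ncard + Fintype.card ι * Nat.card S) : (pencilPoint W S y z).Injective := by
  have hdom : Nat.card (W ⊕ ι × S) = W.ncard + Fintype.card ι * Nat.card S := by
    rw [Nat.card_sum, Nat.card_prod, Nat.card_coe_set_eq, Nat.card_eq_fintype_card (α := ι)]
  rw [← Set.injOn_univ, ← Set.ncard_image_iff, Set.image_univ, Set.ncard_univ, hdom]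
  exact hcard

lemma secantCount_pencilSet [Fintype ι] (hinj : (pencilPoint W S y z).Injective)
    (L : Submodule K (Fin 3 → K)) :
    secantCount (pencilSet W S y z) L = Nat.card {w : W // ![0, 1, (w : K)] ∈ L} +
      ∑ i, Nat.card {s : S // ![1, y i, z i + (s : K)] ∈ L} := by
  rw [pencilSet, secantCount_range hinj, Nat.card_congr Equiv.subtypeSum, Nat.card_sum,
    Nat.card_congr (Equiv.subtypeProdEquivSigmaSubtype
      fun i s => OnLine (pencilPoint W S y z (.inr (i, s))) L), Nat.card_sigma]
  simp only [pencilPoint, onLine_pt3]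

lemma secantCount_pencilSet_lineX0 [Finite ι] (hinj : (pencilPoint W S y z).Injective) :
    secantCount (pencilSet W S y z) (lineX0 K) = W.ncard := by
  have := Fintype.ofFinite ι
  simp [secantCount_pencilSet hinj, mem_lineX0]

lemma secantCount_pencilSet_lineYaX [Fintype ι] (hinj : (pencilPoint W S y z).Injective)
    (a : K) :
    secantCount (pencilSet W S y z) (lineYaX a) = Finset.card {i | y i = a} * Nat.card S := by
  rw [secantCount_pencilSet hinj, Finset.card_filter, Finset.sum_mul]
  simp only [mem_lineYaX, Matrix.cons_val, mul_zero, one_ne_zero, Nat.card_of_isEmpty, zero_add,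
    mul_one]
  refine Finset.sum_congr rfl fun i _ => ?_
  split_ifs with hi <;> simp [hi]

lemma secantCount_pencilSet_lineZaXwY [Fintype ι] (hinj : (pencilPoint W S y z).Injective)
    (a w : K) :
    secantCount (pencilSet W S y z) (lineZaXwY a w) = pencilCount W S y z a w := by
  have hunique (T : Set K) (x : K) :
      Nat.card {t : T // (t : K) = x} = if x ∈ T then 1 else 0 := by
    split_ifs with hx
    · exact Nat.card_eq_one_iff_exists.2 ⟨⟨⟨x, hx⟩, rfl⟩, fun t => by grind⟩
    · have : IsEmpty {t : T // (t : K) = x} := ⟨fun t => hx (t.2 ▸ t.1.2)⟩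
      exact Nat.card_of_isEmpty
  rw [secantCount_pencilSet hinj, pencilCount, Finset.card_filter]
  simp only [mem_lineZaXwY, Matrix.cons_val, mul_zero, mul_one, zero_add, ← eq_sub_iff_add_eq']
  exact congrArg₂ _ (hunique W w) (Finset.sum_congr rfl fun i _ => hunique S _)

end PencilSet

section PencilCount

variable {ι : Type*} [Fintype K] [Fintype ι] {W : Set K} {S : AddSubgroup K} {y z : ι → K}

lemma sum_pencilCount_left (w : K) :
    ∑ a, pencilCount W S y z a w =
      (if w ∈ W then Fintype.card K else 0) + Fintype.card ι * Nat.card S := by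
  have hfibre (i : ι) : Finset.card {a | a + w * y i - z i ∈ S} = Nat.card S := by
    simpa only [one_mul, ← add_sub_assoc, SetLike.mem_coe, SetLike.coe_sort_coe] using
      card_filter_affine_mem (S : Set K) one_ne_zero (w * y i - z i)
  simp only [pencilCount, Finset.sum_add_distrib, sum_card_filter_comm, hfibre]
  split_ifs <;> simp

lemma sum_pencilCount_through (hy : y.Injective) (i : ι) {b : K} (hb : b - z i ∈ S) :
    ∑ w, pencilCount W S y z (b - w * y i) w =
      W.ncard + Fintype.card K + (Fintype.card ι - 1) * Nat.card S := by
  have hfibre (j : ι) : Finset.card {w | b - w * y i + w * y j - z j ∈ S} =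
      if j = i then Fintype.card K else Nat.card S := by
    split_ifs with hj
    · simp [hj, hb]
    · have hshift (w : K) : b - w * y i + w * y j - z j = (y j - y i) * w + (b - z j) := by ring
      simp only [hshift]
      exact card_filter_affine_mem (S : Set K) (sub_ne_zero.2 (hy.ne hj)) (b - z j)
  have hW : ∑ w, (if w ∈ W then 1 else 0) = W.ncard := by
    simpa only [one_mul, add_zero, Finset.card_filter, Nat.card_coe_set_eq] using
      card_filter_affine_mem W one_ne_zero 0
  simp only [pencilCount, Finset.sum_add_distrib, sum_card_filter_comm, hfibre, hW]
  rw [← Finset.add_sum_erase _ _ (Finset.mem_univ i), if_pos rfl,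
    Finset.sum_congr rfl fun j hj => if_neg (Finset.ne_of_mem_erase hj), Finset.sum_const,
    Finset.card_erase_of_mem (Finset.mem_univ i), Finset.card_univ, smul_eq_mul, add_assoc]

end PencilCount

/-- The normal form of an elation KM-arc of type `t = |S|` whose `t`-secants other than `X = 0` are
the lines `Y = y i X`; type `q/4` is the case `ι = Fin 4`. -/
structure IsPencilKMArc {ι : Type*} [Fintype K] [Fintype ι] (W : Set K) (S : AddSubgroup K)
    (y z : ι → K) : Prop where
  two_lt_card : 2 < Nat.card S
  ncard_eq : W.ncard = Nat.card S
  card_field : Fintype.card K = Fintype.card ι * Nat.card S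
  isKMArc : IsKMArc (Fintype.card K) (Nat.card S) (pencilSet W S y z)

namespace IsPencilKMArc

variable {ι : Type*} [Fintype K] [Fintype ι] {W : Set K} {S : AddSubgroup K} {y z : ι → K}

lemma pencilPoint_injective (hA : IsPencilKMArc W S y z) : (pencilPoint W S y z).Injective := by
  refine pencilPoint_injective_of_ncard_eq ?_
  rw [hA.isKMArc.1, hA.ncard_eq, hA.card_field, add_comm]

lemma slopes_injective (hA : IsPencilKMArc W S y z) : y.Injective := by
  intro i j hij
  by_contra hne
  have htwo : 2 ≤ Finset.card {k | y k = y j} :=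
    Finset.one_lt_card.2 ⟨i, by simp [hij], j, by simp, hne⟩
  have hcount := hA.isKMArc.2 (lineYaX (y j)) (isLine_lineYaX (y j))
  rw [secantCount_pencilSet_lineYaX hA.pencilPoint_injective] at hcount
  have := hA.two_lt_card
  have := Nat.mul_le_mul_right (Nat.card S) htwo
  omega

lemma pencilCount_eq_zero_or_two_or_card (hA : IsPencilKMArc W S y z) (a w : K) :
    pencilCount W S y z a w = 0 ∨ pencilCount W S y z a w = 2 ∨
      pencilCount W S y z a w = Nat.card S := by
  rw [← secantCount_pencilSet_lineZaXwY hA.pencilPoint_injective]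
  exact hA.isKMArc.2 _ (isLine_lineZaXwY a w)

lemma two_le_pencilCount (hA : IsPencilKMArc W S y z) {a w : K}
    (hpos : pencilCount W S y z a w ≠ 0) : 2 ≤ pencilCount W S y z a w := by
  have := hA.pencilCount_eq_zero_or_two_or_card a w
  have := hA.two_lt_card
  omega

lemma pencilCount_eq_two_of_mem (hA : IsPencilKMArc W S y z) {w : K} (hw : w ∈ W) (a : K) :
    pencilCount W S y z a w = 2 := by
  refine eq_of_le_of_sum_eq_card_mul (f := fun a => pencilCount W S y z a w) (fun b => ?_) ?_ a
  · exact hA.two_le_pencilCount (by rw [pencilCount, if_pos hw]; omega)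
  · rw [sum_pencilCount_left, if_pos hw, ← hA.card_field, mul_two]

lemma pencilCount_eq_two_of_sub_mem (hA : IsPencilKMArc W S y z) {a w : K} {i : ι}
    (hi : a + w * y i - z i ∈ S) : pencilCount W S y z a w = 2 := by
  set b := a + w * y i with hb
  rw [eq_sub_of_add_eq hb.symm]
  refine eq_of_le_of_sum_eq_card_mul (f := fun w => pencilCount W S y z (b - w * y i) w)
    (fun v => hA.two_le_pencilCount ?_) ?_ w
  · have : 0 < Finset.card {j | b - v * y i + v * y j - z j ∈ S} :=
      Finset.card_pos.2 ⟨i, by simpa using hi⟩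
    rw [pencilCount]
    omega
  · have hpos : 0 < Fintype.card ι := Fintype.card_pos_iff.2 ⟨i⟩
    rw [sum_pencilCount_through hA.slopes_injective i hi, hA.ncard_eq, hA.card_field]
    obtain ⟨m, hm⟩ := Nat.exists_eq_add_of_lt hpos
    rw [hm, zero_add, Nat.add_sub_cancel]
    ring

lemma pencilCount_eq_zero_or_two (hA : IsPencilKMArc W S y z) (a w : K) :
    pencilCount W S y z a w = 0 ∨ pencilCount W S y z a w = 2 := by
  by_cases hw : w ∈ W
  · exact .inr (hA.pencilCount_eq_two_of_mem hw a)
  by_cases hi : ∃ i, a + w * y i - z i ∈ S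
  · obtain ⟨i, hi⟩ := hi
    exact .inr (hA.pencilCount_eq_two_of_sub_mem hi)
  · simp only [not_exists] at hi
    simp [pencilCount, hw, hi]

lemma secantCount_eq_card_iff (hA : IsPencilKMArc W S y z) {L : Submodule K (Fin 3 → K)}
    (hL : IsLine L) : secantCount (pencilSet W S y z) L = Nat.card S ↔
      L = lineX0 K ∨ ∃ i, L = lineYaX (y i) := by
  have hinj := hA.pencilPoint_injective
  have htwo := hA.two_lt_card
  constructor
  · intro hcount
    rcases eq_lineX0_or_lineYaX_or_lineZaXwY_of_isLine hL with rfl | ⟨a, rfl⟩ | ⟨a, w, rfl⟩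
    · exact .inl rfl
    · rw [secantCount_pencilSet_lineYaX hinj] at hcount
      have hne : Finset.card {i | y i = a} ≠ 0 := fun h0 => by rw [h0] at hcount; omega
      obtain ⟨i, hi⟩ := Finset.card_ne_zero.1 hne
      exact .inr ⟨i, by rw [(Finset.mem_filter.1 hi).2]⟩
    · rw [secantCount_pencilSet_lineZaXwY hinj] at hcount
      have := hA.pencilCount_eq_zero_or_two a w
      omega
  · rintro (rfl | ⟨i, rfl⟩)
    · rw [secantCount_pencilSet_lineX0 hinj, hA.ncard_eq]
    · have hone : Finset.card {j | y j = y i} = 1 :=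
        Finset.card_eq_one.2 ⟨i, by ext j; simp [hA.slopes_injective.eq_iff]⟩
      rw [secantCount_pencilSet_lineYaX hinj, hone, one_mul]

lemma card_filter_sub_mem_le_two (hA : IsPencilKMArc W S y z) (a w : K) :
    Finset.card {i | a + w * y i - z i ∈ S} ≤ 2 := by
  have := hA.pencilCount_eq_zero_or_two a w
  rw [pencilCount] at this
  omega

lemma sum_sub_mem [CharP K 2] {y z : Fin 4 → K} (hA : IsPencilKMArc W S y z) (w : K) :
    ∑ i, (z i - w * y i) ∈ S := by
  have hV : ∀ v : K ⧸ S, v + v = 0 := fun v => by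
    obtain ⟨x, rfl⟩ := QuotientAddGroup.mk_surjective v
    rw [← QuotientAddGroup.mk_add, CharTwo.add_self_eq_zero, QuotientAddGroup.mk_zero]
  rw [← QuotientAddGroup.eq_zero_iff, QuotientAddGroup.mk_sum]
  refine sum_fin_four_eq_zero_of_card_fibers hV (c := if w ∈ W then 1 else 0) fun v => ?_
  obtain ⟨a, rfl⟩ := QuotientAddGroup.mk_surjective v
  have hclass (i : Fin 4) : (((z i - w * y i : K) : K ⧸ S) = a) ↔ a + w * y i - z i ∈ S := by
    rw [eq_comm, QuotientAddGroup.eq_iff_sub_mem, sub_sub_eq_add_sub]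
  simp only [hclass]
  exact hA.pencilCount_eq_zero_or_two a w

lemma sum_slopes_eq_zero [CharP K 2] {y z : Fin 4 → K} (hA : IsPencilKMArc W S y z) :
    ∑ i, y i = 0 := by
  have hS : S ≠ ⊤ := by
    rintro rfl
    have hK := hA.card_field
    rw [AddSubgroup.card_top, Nat.card_eq_fintype_card, Fintype.card_fin] at hK
    have := Fintype.card_pos (α := K)
    omega
  refine neg_eq_zero.1 (eq_zero_of_forall_mul_add_mem hS (d := ∑ i, z i) fun w => ?_)
  rw [mul_neg, neg_add_eq_sub, Finset.mul_sum, ← Finset.sum_sub_distrib]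
  exact hA.sum_sub_mem w

end IsPencilKMArc

lemma Tr_eq_zero_iff_trace_eq_zero [Fintype K] [Algebra (ZMod 2) K] {h : ℕ}
    (hcard : Fintype.card K = 2 ^ h) (x : K) : Tr h x = 0 ↔ Algebra.trace (ZMod 2) K x = 0 := by
  have hrank : finrank (ZMod 2) K = h := by
    have := Module.card_eq_pow_finrank (K := ZMod 2) (V := K)
    rw [hcard, ZMod.card] at this
    exact (Nat.pow_right_injective le_rfl this).symm
  have htrace := FiniteField.algebraMap_trace_eq_sum_pow (ZMod 2) K x
  rw [hrank, Nat.card_zmod] at htrace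
  rw [Tr, ← htrace, map_eq_zero]

lemma exists_eq_setOf_Tr_eq_zero_of_forall_not [Fintype K] [CharP K 2] {h : ℕ}
    (hcard : Fintype.card K = 2 ^ h) {S : AddSubgroup K} (hS : Fintype.card K = 4 * Nat.card S)
    {α : K} (hα0 : α ≠ 0) (hα1 : α ≠ 1) {c d : K}
    (hcd : ∀ w, ¬(w - c ∈ S ∧ α * w - d ∈ S)) :
    ∃ μ, (S : Set K) = {x | Tr h (μ * x) = 0 ∧ Tr h (α * μ * x) = 0} := by
  let _ : Algebra (ZMod 2) K := ZMod.algebra K 2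
  let S₂ : Submodule (ZMod 2) K := AddSubgroup.toZModSubmodule 2 S
  have hrank : finrank (ZMod 2) S₂ + 2 = finrank (ZMod 2) K := by
    refine Nat.pow_right_injective (le_refl 2) ?_
    have hK := Module.natCard_eq_pow_finrank (K := ZMod 2) (V := K)
    have hS₂ : Nat.card S = _ := Module.natCard_eq_pow_finrank (K := ZMod 2) (V := S₂)
    rw [Nat.card_zmod] at hK hS₂
    simp only [pow_add]
    rw [← hK, ← hS₂, Nat.card_eq_fintype_card (α := K), hS, mul_comm]
    norm_num
  have hα : α ∉ (algebraMap (ZMod 2) K).range := by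
    rintro ⟨b, rfl⟩
    fin_cases b
    · exact hα0 (map_zero _)
    · exact hα1 (map_one _)
  obtain ⟨μ, hμ⟩ := exists_mem_iff_trace_mul_eq_zero (S := S₂) hrank hα hcd
  refine ⟨μ, Set.ext fun x => ?_⟩
  rw [Set.mem_ofPred_eq, Tr_eq_zero_iff_trace_eq_zero hcard, Tr_eq_zero_iff_trace_eq_zero hcard]
  exact hμ x

lemma pencilSet_fin_four {W : Set K} {S : AddSubgroup K} {α β α' β' : K} :
    pencilSet W S ![0, 1, α, β] ![0, 1, α', β'] =
      {P | ∃ w ∈ W, P = pt3 0 1 w (by simp)}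
        ∪ {P | ∃ s ∈ S, P = pt3 1 0 s (by simp)}
        ∪ {P | ∃ s ∈ S, P = pt3 1 1 (1 + s) (by simp)}
        ∪ {P | ∃ s ∈ S, P = pt3 1 α (α' + s) (by simp)}
        ∪ {P | ∃ s ∈ S, P = pt3 1 β (β' + s) (by simp)} := by
  ext P
  simp only [pencilSet, Nat.succ_eq_add_one, Nat.reduceAdd, Set.mem_range, pencilPoint, Sum.exists,
    Subtype.exists, Prod.exists, Fin.exists_fin_succ, Fin.isValue, Matrix.cons_val_zero, zero_add,
    Matrix.cons_val_succ, Matrix.cons_val_fin_one, IsEmpty.exists_iff, or_false, Set.mem_union,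
    Set.mem_ofPred_eq, eq_comm (a := P), or_assoc]
  grind

lemma IsPencilKMArc.exists_eq_setOf_Tr_eq_zero [Fintype K] [CharP K 2] {h : ℕ}
    (hcard : Fintype.card K = 2 ^ h) {W : Set K} {S : AddSubgroup K} {α β α' β' : K}
    (hA : IsPencilKMArc W S ![0, 1, α, β] ![0, 1, α', β']) :
    ∃ μ, (S : Set K) = {x | Tr h (μ * x) = 0 ∧ Tr h (α * μ * x) = 0} := by
  have hα (i : Fin 4) (hi : i ≠ 2) : α ≠ ![0, 1, α, β] i := hA.slopes_injective.ne hi.symm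
  refine exists_eq_setOf_Tr_eq_zero_of_forall_not hcard hA.card_field (hα 0 (by decide))
    (hα 1 (by decide)) (c := 1) (d := α') fun w hw => ?_
  have hthree : ({0, 1, 2} : Finset (Fin 4)) ⊆
      ({i | 0 + w * ![0, 1, α, β] i - ![0, 1, α', β'] i ∈ S} : Finset (Fin 4)) := by
    simpa [Finset.insert_subset_iff, mul_comm w] using hw
  exact absurd ((Finset.card_le_card hthree).trans (hA.card_filter_sub_mem_le_two 0 w)) (by decide)

lemma add_eq_zero_or_one_or_self_or_add_one [CharP K 2] (α a b : K)
    (ha : a = 0 ∨ a = 1 ∨ a = α ∨ a = α + 1) (hb : b = 0 ∨ b = 1 ∨ b = α ∨ b = α + 1) :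
    a + b = 0 ∨ a + b = 1 ∨ a + b = α ∨ a + b = α + 1 := by
  have hone : (1 : K) + 1 = 0 := CharTwo.add_self_eq_zero 1
  grind

/-- Theorem 3.10: if the displayed point set is a KM-arc of type `q/4`,
then `β = α + 1`, `S` is cut out by the traces `μ`, `αμ`, the `q/4`-secants are exactly
`X = 0` and `Y = aX` for `a ∈ {0, 1, α, α+1}`, and this slope set is closed under
addition (an `F₂`-subspace): the `q/4`-secants form an `F₂`-linear pencil with head
the line `X = 0`. -/
theorem elation_q4_linear_pencil
    {K : Type*} [Field K] [Fintype K] (h : ℕ) (hh : 4 ≤ h)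
    (hcard : Fintype.card K = 2 ^ h)
    (S : AddSubgroup K) (hS : Nat.card S = 2 ^ h / 4)
    (α β α' β' : K) (W : Set K) (hW : W.ncard = 2 ^ h / 4)
    (A : Set (Pt K))
    (hAdef : A = {P | ∃ w ∈ W, P = pt3 0 1 w (by simp)}
      ∪ {P | ∃ s ∈ S, P = pt3 1 0 s (by simp)}
      ∪ {P | ∃ s ∈ S, P = pt3 1 1 (1 + s) (by simp)}
      ∪ {P | ∃ s ∈ S, P = pt3 1 α (α' + s) (by simp)}
      ∪ {P | ∃ s ∈ S, P = pt3 1 β (β' + s) (by simp)})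
    (hA : IsKMArc (2 ^ h) (2 ^ h / 4) A) :
    β = α + 1 ∧
    (∃ μ : K, (S : Set K) = {x : K | Tr h (μ * x) = 0 ∧ Tr h (α * μ * x) = 0}) ∧
    (∀ L : Submodule K (Fin 3 → K), IsLine L →
      (secantCount A L = 2 ^ h / 4 ↔
        L = lineX0 K ∨ ∃ a : K, (a = 0 ∨ a = 1 ∨ a = α ∨ a = α + 1) ∧ L = lineYaX a)) ∧
    (∀ a b : K, (a = 0 ∨ a = 1 ∨ a = α ∨ a = α + 1) →
      (b = 0 ∨ b = 1 ∨ b = α ∨ b = α + 1) →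
      (a + b = 0 ∨ a + b = 1 ∨ a + b = α ∨ a + b = α + 1)) := by
  have hchar : CharP K 2 := charP_of_card_eq_prime_pow hcard
  have hfour : 2 ^ h = 4 * Nat.card S := by
    have hdvd : 4 ∣ 2 ^ h := pow_dvd_pow 2 (show 2 ≤ h by omega)
    rw [hS, Nat.mul_div_cancel' hdvd]
  have htwo : 2 < Nat.card S := by
    have := Nat.pow_le_pow_right two_pos hh
    omega
  rw [← pencilSet_fin_four] at hAdef
  subst hAdef
  rw [← hS] at hA hW ⊢
  have hpencil : IsPencilKMArc W S ![0, 1, α, β] ![0, 1, α', β'] :=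
    ⟨htwo, hW, by rw [hcard, hfour, Fintype.card_fin], hcard ▸ hA⟩
  have hβ : β = α + 1 := by
    have hsum := hpencil.sum_slopes_eq_zero
    simp only [Fin.sum_univ_four, Matrix.cons_val, zero_add] at hsum
    rw [add_comm α, ← CharTwo.add_eq_zero, add_comm, hsum]
  refine ⟨hβ, hpencil.exists_eq_setOf_Tr_eq_zero hcard, fun L hL => ?_,
    add_eq_zero_or_one_or_self_or_add_one α⟩
  rw [hpencil.secantCount_eq_card_iff hL]
  simp [Fin.exists_fin_succ, hβ]
end
end

section
/- Let q = 2^h with h ≥ 4 and let A be an elation KM-arc of type q/4 in PG(2,q). Then A is a translation KM-arc: there exists a line ℓ of PG(2,q) such that the group of all elations of PG(2,q) with axis ℓ that stabilise A acts transitively on A \ ℓ. -/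
open scoped Classical

noncomputable section

variable {K : Type*} [Field K]

/-!
Choose affine coordinates in which the elation line is the line at infinity and the nucleus is the
common point of the vertical lines. Elations with axis at infinity become translations of `K × K`,
so the elation property says that the affine part `B` of the arc meets every vertical line in the
empty set or in a coset of one subgroup `S`, of index four. Hence `B` is the preimage of its image
`W` in `K × K ⧸ S`, and `W` has four or five elements. For each slope `m`, every line `Y = mX + k`
meets `B` in a number of points whose parity does not depend on `k`, because it meets the arc in `0`
or `2` points and the point at infinity contributes the same amount for all `k`. Therefore the map
`(y, v) ↦ v - my` from `W` to the Klein four-group `K ⧸ S` has fibres of equal parity. This makes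
`|W|` even, hence equal to four; and since the four elements of `K ⧸ S` add up to zero, the values
of each of these maps on `W` add up to zero, so the elements of `W` do too. Four elements of an
elementary abelian 2-group adding up to zero form a coset of a subgroup, so `W`, and with it `B`, is
a single orbit of translations.
-/

theorem even_card_of_card_fiber_modEq {ι V : Type*} [Finite V] [DecidableEq V]
    (hV : Even (Nat.card V)) {W : Finset ι} {f : ι → V}
    (hf : ∀ v v', {w ∈ W | f w = v}.card ≡ {w ∈ W | f w = v'}.card [MOD 2]) :
    Even W.card := by
  have := Fintype.ofFinite V
  rw [Finset.card_eq_sum_card_fiberwise (f := f) (t := Finset.univ) (by simp), Nat.even_iff,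
    Finset.sum_nat_mod]
  obtain hempty | ⟨⟨v₀⟩⟩ := isEmpty_or_nonempty V
  · simp
  · rw [Finset.sum_congr rfl fun v _ => hf v v₀, ← Finset.sum_nat_mod, ← Nat.even_iff,
      Finset.sum_const, smul_eq_mul, Finset.card_univ, ← Nat.card_eq_fintype_card]
    exact hV.mul_right _

section KleinFour

variable {V : Type*} [AddCommGroup V]

theorem add_add_mem_of_card_eq_four_of_sum_eq_zero (hV : ∀ v : V, v + v = 0) {W : Finset V}
    (hcard : W.card = 4) (hsum : ∑ w ∈ W, w = 0) {a b c : V} (ha : a ∈ W) (hb : b ∈ W)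
    (hc : c ∈ W) : a + b + c ∈ W := by
  obtain rfl | hab := eq_or_ne a b
  · rwa [hV, zero_add]
  obtain rfl | hac := eq_or_ne a c
  · rwa [add_right_comm, hV, zero_add]
  obtain rfl | hbc := eq_or_ne b c
  · rwa [add_assoc, hV, add_zero]
  have habc : ({a, b, c} : Finset V) ⊆ W := by simp [Finset.insert_subset_iff, ha, hb, hc]
  obtain ⟨d, hd⟩ : ∃ d, W \ {a, b, c} = {d} := by
    rw [← Finset.card_eq_one, Finset.card_sdiff_of_subset habc, hcard,
      Finset.card_eq_three.2 ⟨a, b, c, hab, hac, hbc, rfl⟩]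
  have hd_sum : d + (a + b + c) = 0 := by
    rw [← hsum, ← Finset.sum_sdiff habc, hd, Finset.sum_singleton,
      Finset.sum_insert (by simp [hab, hac]), Finset.sum_pair hbc, add_assoc a]
  have hd_mem : d ∈ W := (Finset.mem_sdiff.1 (hd ▸ Finset.mem_singleton_self d)).1
  rwa [← add_left_cancel (hd_sum.trans (hV d).symm)] at hd_mem

theorem isAddKleinFour_of_card_eq_four (hcard : Nat.card V = 4) (hV : ∀ v : V, v + v = 0) :
    IsAddKleinFour V where
  card_four := hcard
  exponent_two := by
    have : Finite V := Nat.finite_of_card_ne_zero (by omega)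
    have : Nontrivial V := Finite.one_lt_card_iff_nontrivial.1 (by omega)
    refine ((Nat.dvd_prime Nat.prime_two).1
      (AddMonoid.exponent_dvd_of_forall_nsmul_eq_zero fun v => ?_)).resolve_left ?_
    · rw [two_nsmul, hV]
    · rw [AddMonoid.exp_eq_one_iff]
      exact not_subsingleton V

variable [IsAddKleinFour V]

theorem sum_univ_eq_zero_of_isAddKleinFour [Fintype V] : ∑ v : V, v = 0 := by
  have hcard : 1 < (Finset.univ.erase (0 : V)).card := by
    simp [Finset.card_erase_of_mem, IsAddKleinFour.card_four']
  obtain ⟨a, ha, b, hb, hab⟩ := Finset.one_lt_card.1 hcard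
  replace ha := Finset.ne_of_mem_erase ha
  replace hb := Finset.ne_of_mem_erase hb
  have hab_ne : a + b ≠ 0 := by rwa [Ne, add_eq_zero_iff_eq_neg, IsAddKleinFour.neg_eq_self]
  rw [← IsAddKleinFour.eq_finset_univ ha hb hab, Finset.sum_insert (by simp [ha, hb, hab_ne]),
    Finset.sum_insert (by simp [ha, hab]), Finset.sum_pair hb, add_zero, IsAddKleinFour.add_self]

theorem sum_eq_zero_of_card_fiber_modEq [Finite V] [DecidableEq V] {ι : Type*} {W : Finset ι}
    {f : ι → V} (hf : ∀ v v', {w ∈ W | f w = v}.card ≡ {w ∈ W | f w = v'}.card [MOD 2]) :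
    ∑ w ∈ W, f w = 0 := by
  have := Fintype.ofFinite V
  calc ∑ w ∈ W, f w = ∑ v, {w ∈ W | f w = v}.card • v := by
        rw [← Finset.sum_fiberwise' W f fun v => v]
        simp only [Finset.sum_const]
    _ = ∑ v, {w ∈ W | f w = 0}.card • v := by
        refine Finset.sum_congr rfl fun v _ => ?_
        have hv : 2 • v = 0 := by rw [two_nsmul, IsAddKleinFour.add_self]
        rw [nsmul_eq_mod_nsmul _ hv, hf v 0, ← nsmul_eq_mod_nsmul _ hv]
    _ = 0 := by rw [← Finset.smul_sum, sum_univ_eq_zero_of_isAddKleinFour, smul_zero]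

end KleinFour

section AffinePlane

open AddAction

open scoped Pointwise

variable {S : AddSubgroup K} {B : Set (K × K)}

/-- Modulo the vertical translations by `S`, the line `Y = mX + k` of the affine plane `K × K`
becomes the fibre over `k` of this map. -/
def interceptHom (S : AddSubgroup K) (m : K) : K × K ⧸ S →+ K ⧸ S :=
  AddMonoidHom.snd K (K ⧸ S) -
    (QuotientAddGroup.mk' S).comp ((AddMonoidHom.mulLeft m).comp (AddMonoidHom.fst K (K ⧸ S)))

theorem interceptHom_apply (m y : K) (v : K ⧸ S) :
    interceptHom S m (y, v) = v - (m * y : K) := rfl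

theorem eq_zero_of_forall_interceptHom_eq_zero (hS : S ≠ ⊤)
    {w : K × K ⧸ S} (hw : ∀ m, interceptHom S m w = 0) : w = 0 := by
  obtain ⟨y, v⟩ := w
  obtain rfl : v = 0 := by simpa [interceptHom_apply] using hw 0
  suffices y = 0 by rw [this]; rfl
  by_contra hy
  refine hS ((AddSubgroup.eq_top_iff' S).2 fun x => ?_)
  simpa [interceptHom_apply, hy] using hw (x / y)

/-- The group of all `s` for which the vertical translation by `(0, s)` stabilises `B`. -/
def verticalStabilizer (B : Set (K × K)) : AddSubgroup K :=
  (stabilizer (K × K) B).comap (AddMonoidHom.inr K K)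

/-- The image of `B` in the quotient of `K × K` by its stabilising vertical translations. -/
def shadow (B : Set (K × K)) : Set (K × K ⧸ verticalStabilizer B) :=
  Prod.map id (↑) '' B

theorem prodMk_mem_shadow_iff {y z : K} :
    (y, (z : K ⧸ verticalStabilizer B)) ∈ shadow B ↔ (y, z) ∈ B := by
  refine ⟨?_, fun h => ⟨_, h, rfl⟩⟩
  rintro ⟨⟨y, z'⟩, hB, heq⟩
  obtain ⟨rfl, hz⟩ := Prod.mk.inj heq
  have hstab : (0, -z' + z) ∈ stabilizer (K × K) B := QuotientAddGroup.eq.1 hz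
  have := (mem_stabilizer_set.1 hstab (y, z')).2 hB
  simpa using this

theorem mem_stabilizer_of_forall_add_mem_shadow [Finite K] {v : K × K}
    (hv : ∀ w ∈ shadow B, (v.1, (v.2 : K ⧸ verticalStabilizer B)) + w ∈ shadow B) :
    v ∈ stabilizer (K × K) B :=
  (mem_stabilizer_set' B.toFinite).2 fun _ hp =>
    prodMk_mem_shadow_iff.1 (hv _ (prodMk_mem_shadow_iff.2 hp))

theorem ncard_eq_ncard_shadow_mul :
    B.ncard = (shadow B).ncard * Nat.card (verticalStabilizer B) := by
  let e : K × K ≃ (K × K ⧸ verticalStabilizer B) × verticalStabilizer B :=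
    ((Equiv.refl K).prodCongr AddSubgroup.addGroupEquivQuotientProdAddSubgroup).trans
      (Equiv.prodAssoc _ _ _).symm
  have he : B = e ⁻¹' shadow B ×ˢ Set.univ := by
    ext p
    rw [Set.mem_preimage, Set.mem_prod, and_iff_left (Set.mem_univ _)]
    exact prodMk_mem_shadow_iff.symm
  rw [← Set.ncard_univ, ← Set.ncard_prod]
  conv_lhs => rw [he]
  exact Set.ncard_preimage_of_injective_subset_range e.injective (by simp [e.surjective.range_eq])

theorem ncard_shadow_fiber (m k : K) :
    {w ∈ shadow B | interceptHom (verticalStabilizer B) m w = k}.ncard =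
      {y | (y, m * y + k) ∈ B}.ncard := by
  symm
  refine Set.BijOn.ncard_eq (f := fun y => (y, ((m * y + k : K) : K ⧸ verticalStabilizer B)))
    ⟨fun y hy => ⟨prodMk_mem_shadow_iff.2 hy, ?_⟩, fun y _ y' _ h => (Prod.mk.inj h).1, ?_⟩
  · simp [interceptHom_apply]
  · rintro ⟨y, v⟩ ⟨hmem, hv⟩
    obtain rfl : v = ((m * y + k : K) : K ⧸ verticalStabilizer B) := by
      rw [QuotientAddGroup.mk_add, ← hv, interceptHom_apply, add_sub_cancel]
    exact ⟨y, prodMk_mem_shadow_iff.1 hmem, rfl⟩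

theorem card_verticalStabilizer {p : K × K} (hp : p ∈ B)
    (hvert : ∀ q ∈ B, q.1 = p.1 → q - p ∈ stabilizer (K × K) B) :
    Nat.card (verticalStabilizer B) = {z | (p.1, z) ∈ B}.ncard := by
  refine Set.BijOn.ncard_eq (s := (verticalStabilizer B : Set K)) (f := (· + p.2))
    ⟨fun s hs => ?_, fun _ _ _ _ => add_right_cancel, fun z hz => ⟨z - p.2, ?_, ?_⟩⟩
  · have := (mem_stabilizer_set.1 hs p).2 hp
    simpa [Prod.add_def] using this
  · have hstab := hvert (p.1, z) hz rfl
    rwa [show (p.1, z) - p = (0, z - p.2) from Prod.ext (sub_self _) rfl] at hstab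
  · simp

theorem add_add_mem_of_card_fiber_interceptHom_modEq [CharP K 2] (hS : Nat.card (K ⧸ S) = 4)
    {W : Finset (K × K ⧸ S)} (hW : W.card = 4 ∨ W.card = 5)
    (hpar : ∀ m v v', {w ∈ W | interceptHom S m w = v}.card ≡
      {w ∈ W | interceptHom S m w = v'}.card [MOD 2])
    {a b c : K × K ⧸ S} (ha : a ∈ W) (hb : b ∈ W) (hc : c ∈ W) : a + b + c ∈ W := by
  have : Finite (K ⧸ S) := Nat.finite_of_card_ne_zero (by omega)
  have hquot : ∀ v : K ⧸ S, v + v = 0 := by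
    rintro ⟨x⟩
    exact congrArg QuotientAddGroup.mk (CharTwo.add_self_eq_zero x)
  have := isAddKleinFour_of_card_eq_four hS hquot
  have heven : Even W.card :=
    even_card_of_card_fiber_modEq (f := interceptHom S 0) (by rw [hS]; decide) (hpar 0)
  have hsum : ∑ w ∈ W, w = 0 := by
    refine eq_zero_of_forall_interceptHom_eq_zero ?_ fun m => ?_
    · rintro rfl
      simp at hS
    · rw [map_sum, sum_eq_zero_of_card_fiber_modEq (hpar m)]
  refine add_add_mem_of_card_eq_four_of_sum_eq_zero
    (fun w => Prod.ext (CharTwo.add_self_eq_zero _) (hquot _)) ?_ hsum ha hb hc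
  exact hW.resolve_right fun h => by rw [h] at heven; exact absurd heven (by decide)

theorem charP_two_of_even_card [Finite K] (hK : Even (Nat.card K)) : CharP K 2 := by
  have := Fintype.ofFinite K
  rw [Nat.card_eq_fintype_card, Nat.even_iff] at hK
  exact ringChar.of_eq (FiniteField.even_card_iff_char_two.2 hK)

theorem sub_mem_stabilizer_of_ncard_line_modEq [Finite K] {t : ℕ} (hcard : Nat.card K = 4 * t)
    (hB : B.ncard = 4 * t ∨ B.ncard = 5 * t) (hcol : ∀ p ∈ B, {z | (p.1, z) ∈ B}.ncard = t)
    (hvert : ∀ p ∈ B, ∀ q ∈ B, q.1 = p.1 → q - p ∈ stabilizer (K × K) B)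
    (hpar : ∀ m k k', {y | (y, m * y + k) ∈ B}.ncard ≡ {y | (y, m * y + k') ∈ B}.ncard [MOD 2])
    {p q : K × K} (hp : p ∈ B) (hq : q ∈ B) : q - p ∈ stabilizer (K × K) B := by
  have := charP_two_of_even_card (K := K) (by rw [hcard]; exact (by decide : Even 4).mul_right t)
  have ht : 0 < t := by
    have := Nat.card_pos (α := K)
    omega
  have hstab : Nat.card (verticalStabilizer B) = t :=
    (card_verticalStabilizer hp (hvert p hp)).trans (hcol p hp)
  have hquot : Nat.card (K ⧸ verticalStabilizer B) = 4 := by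
    have := (verticalStabilizer B).card_eq_card_quotient_mul_card_addSubgroup
    rw [hcard, hstab] at this
    exact (Nat.eq_of_mul_eq_mul_right ht this).symm
  have hfin := (shadow B).toFinite
  have hW : hfin.toFinset.card = 4 ∨ hfin.toFinset.card = 5 := by
    rw [← Set.ncard_eq_toFinset_card _ hfin]
    rw [ncard_eq_ncard_shadow_mul, hstab] at hB
    exact hB.imp (Nat.eq_of_mul_eq_mul_right ht) (Nat.eq_of_mul_eq_mul_right ht)
  have hfiber (m k : K) : {w ∈ hfin.toFinset | interceptHom (verticalStabilizer B) m w = k}.card =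
      {y | (y, m * y + k) ∈ B}.ncard := by
    rw [← ncard_shadow_fiber, ← Set.ncard_coe_finset]
    simp
  have hadd := fun {a b c} => add_add_mem_of_card_fiber_interceptHom_modEq hquot hW
    (fun m => by
      rintro ⟨k⟩ ⟨k'⟩
      exact (hfiber m k).symm ▸ (hfiber m k').symm ▸ hpar m k k') (a := a) (b := b) (c := c)
  simp only [Set.Finite.mem_toFinset] at hadd
  refine mem_stabilizer_of_forall_add_mem_shadow fun w hw => ?_
  have := hadd (prodMk_mem_shadow_iff.2 hq) (prodMk_mem_shadow_iff.2 hp) hw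
  rw [CharTwo.sub_eq_add]
  exact this

end AffinePlane

section Incidence

variable {L M : Submodule K (Fin 3 → K)} {P Q : Pt K}

theorem onLine_mk_iff {v : Fin 3 → K} {hv : v ≠ 0} :
    OnLine (Projectivization.mk K v hv) L ↔ v ∈ L := by
  rw [OnLine, Projectivization.submodule_mk, Submodule.span_singleton_le_iff_mem]

theorem isLine_ker {φ : Module.Dual K (Fin 3 → K)} (hφ : φ ≠ 0) : IsLine (LinearMap.ker φ) := by
  have := Module.Dual.finrank_ker_add_one_of_ne_zero hφ
  rw [Module.finrank_fin_fun] at this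
  exact Nat.succ_injective this

theorem IsLine.eq_of_onLine (hL : IsLine L) (hM : IsLine M) (hPQ : P ≠ Q) (hPL : OnLine P L)
    (hQL : OnLine Q L) (hPM : OnLine P M) (hQM : OnLine Q M) : L = M := by
  refine Projectivization.line_unique hPQ L M hL hM ?_ ?_ ?_ ?_ <;>
    rwa [Submodule.mem_projectivization_iff_submodule_le]

theorem IsLine.exists_onLine_ne (hL : IsLine L) (P : Pt K) : ∃ Q : Pt K, OnLine Q L ∧ Q ≠ P := by
  obtain ⟨v, hvL, hvP⟩ : ∃ v ∈ L, v ∉ P.submodule := by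
    refine SetLike.not_le_iff_exists.1 fun hle => ?_
    have := Submodule.finrank_mono hle
    rw [hL, P.finrank_submodule] at this
    omega
  have hv : v ≠ 0 := fun h => hvP (h ▸ P.submodule.zero_mem)
  exact ⟨Projectivization.mk K v hv, onLine_mk_iff.2 hvL, fun h => hvP (h ▸ onLine_mk_iff.1 le_rfl)⟩

end Incidence

section Chart

variable {e : (Fin 3 → K) ≃ₗ[K] K × K × K} {p q v : K × K} {hv : v ≠ 0}

/-- In the chart `e`, the point of the projective plane corresponding to the point `p` of the
affine plane `K × K`. -/
def affinePt (e : (Fin 3 → K) ≃ₗ[K] K × K × K) (p : K × K) : Pt K :=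
  Projectivization.mk K (e.symm (1, p)) (by simp [Prod.ext_iff])

/-- In the chart `e`, the point at infinity of the affine lines with direction `v`. -/
def dirPt (e : (Fin 3 → K) ≃ₗ[K] K × K × K) (v : K × K) (hv : v ≠ 0) : Pt K :=
  Projectivization.mk K (e.symm (0, v)) (by simpa [Prod.ext_iff] using hv)

/-- The line at infinity of the chart `e`. -/
def infLine (e : (Fin 3 → K) ≃ₗ[K] K × K × K) : Submodule K (Fin 3 → K) :=
  LinearMap.ker (LinearMap.fst K K (K × K) ∘ₗ e.toLinearMap)

/-- In the chart `e`, the projective closure of the affine line through `p` with direction `v`. -/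
def affineLine (e : (Fin 3 → K) ≃ₗ[K] K × K × K) (p v : K × K) : Submodule K (Fin 3 → K) :=
  Submodule.span K {e.symm (1, p), e.symm (0, v)}

theorem affinePt_injective : Function.Injective (affinePt e) := by
  intro p q h
  obtain ⟨c, hc⟩ := (Projectivization.mk_eq_mk_iff' ..).1 h
  rw [← map_smul, e.symm.injective.eq_iff] at hc
  obtain ⟨rfl, hpq⟩ : c = 1 ∧ c • q = p := by simpa using hc
  rw [← hpq, one_smul]

theorem dirPt_eq_dirPt_iff {w : K × K} {hw : w ≠ 0} :
    dirPt e v hv = dirPt e w hw ↔ ∃ c : K, c • w = v := by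
  rw [dirPt, dirPt, Projectivization.mk_eq_mk_iff']
  simp_rw [← map_smul, e.symm.injective.eq_iff]
  simp

theorem isLine_infLine : IsLine (infLine e) :=
  isLine_ker fun h => by simpa using LinearMap.congr_fun h (e.symm (1, 0))

theorem not_onLine_affinePt_infLine : ¬OnLine (affinePt e p) (infLine e) := by
  simp [affinePt, onLine_mk_iff, infLine]

theorem onLine_dirPt_infLine : OnLine (dirPt e v hv) (infLine e) := by
  simp [dirPt, onLine_mk_iff, infLine]

theorem exists_eq_affinePt {P : Pt K} (hP : ¬OnLine P (infLine e)) : ∃ p, P = affinePt e p := by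
  induction P using Projectivization.ind with
  | h x hx =>
    have hx₀ : (e x).1 ≠ 0 := by simpa [onLine_mk_iff, infLine] using hP
    refine ⟨(e x).1⁻¹ • (e x).2, (Projectivization.mk_eq_mk_iff' ..).2 ⟨(e x).1, ?_⟩⟩
    rw [← map_smul, LinearEquiv.symm_apply_eq]
    simp [hx₀]

theorem isLine_affineLine (hv : v ≠ 0) : IsLine (affineLine e p v) := by
  have hli : LinearIndependent K ![e.symm (1, p), e.symm (0, v)] := by
    refine LinearIndependent.pair_iff.2 fun a b h => ?_
    rw [← map_smul, ← map_smul, ← map_add, LinearEquiv.map_eq_zero_iff] at h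
    obtain ⟨rfl, hb⟩ : a = 0 ∧ a • p + b • v = 0 := by simpa using h
    simpa [hv] using hb
  have := finrank_span_eq_card hli
  rwa [Matrix.range_cons_cons_empty, Fintype.card_fin] at this

theorem onLine_dirPt_affineLine : OnLine (dirPt e v hv) (affineLine e p v) :=
  onLine_mk_iff.2 (Submodule.subset_span (by simp))

theorem onLine_affinePt_affineLine_iff :
    OnLine (affinePt e q) (affineLine e p v) ↔ ∃ s : K, p + s • v = q := by
  rw [affinePt, onLine_mk_iff, affineLine, Submodule.mem_span_pair]
  simp_rw [← map_smul, ← map_add, e.symm.injective.eq_iff]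
  simp

theorem onLine_affinePt_affineLine : OnLine (affinePt e p) (affineLine e p v) :=
  onLine_affinePt_affineLine_iff.2 ⟨0, by simp⟩

theorem eq_dirPt_of_onLine_affineLine {P : Pt K} (hP : OnLine P (affineLine e p v))
    (hP_inf : OnLine P (infLine e)) : P = dirPt e v hv := by
  by_contra hne
  have hlines := (isLine_affineLine hv).eq_of_onLine isLine_infLine hne hP
    onLine_dirPt_affineLine hP_inf onLine_dirPt_infLine
  exact not_onLine_affinePt_infLine (hlines ▸ onLine_affinePt_affineLine (e := e) (p := p))

theorem affineLine_ne_infLine : affineLine e p v ≠ infLine e := fun h =>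
  not_onLine_affinePt_infLine (h ▸ onLine_affinePt_affineLine (e := e) (p := p))

theorem exists_chart {N : Pt K} {L : Submodule K (Fin 3 → K)} (hL : IsLine L) (hN : OnLine N L) :
    ∃ e, L = infLine e ∧ N = dirPt e (0, 1) (by simp) := by
  obtain ⟨M, hM, hMN⟩ := hL.exists_onLine_ne N
  let e₀ : (Fin 3 → K) ≃ₗ[K] K × K × K := LinearEquiv.ofFinrankEq _ _ (by simp)
  have hne : dirPt e₀ (1, 0) (by simp) ≠ dirPt e₀ (0, 1) (by simp) := by
    simp [dirPt_eq_dirPt_iff]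
  obtain ⟨g, hgM, hgN⟩ := MulAction.is_two_pretransitive_iff.1
    (Projectivization.linearEquiv_is_two_pretransitive K (Fin 3 → K)) hne hMN
  have hchart {v : K × K} (hv : v ≠ 0) : dirPt (g.symm ≪≫ₗ e₀) v hv = g • dirPt e₀ v hv := rfl
  rw [← hchart] at hgM hgN
  subst hgM hgN
  exact ⟨_, hL.eq_of_onLine isLine_infLine hMN hM hN onLine_dirPt_infLine onLine_dirPt_infLine, rfl⟩

end Chart

section Counting

variable {A : Set (Pt K)} {e : (Fin 3 → K) ≃ₗ[K] K × K × K}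

theorem secantCount_affineLine [Finite K] {p v : K × K} (hv : v ≠ 0) :
    secantCount A (affineLine e p v) =
      {s : K | affinePt e (p + s • v) ∈ A}.ncard + if dirPt e v hv ∈ A then 1 else 0 := by
  have haff : {P ∈ A | OnLine P (affineLine e p v)} \ {P | OnLine P (infLine e)} =
      (fun s : K => affinePt e (p + s • v)) '' {s | affinePt e (p + s • v) ∈ A} := by
    ext P
    constructor
    · rintro ⟨⟨hPA, hPL⟩, hP⟩
      obtain ⟨q, rfl⟩ := exists_eq_affinePt hP
      obtain ⟨s, rfl⟩ := onLine_affinePt_affineLine_iff.1 hPL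
      exact ⟨s, hPA, rfl⟩
    · rintro ⟨s, hs, rfl⟩
      exact ⟨⟨hs, onLine_affinePt_affineLine_iff.2 ⟨s, rfl⟩⟩, not_onLine_affinePt_infLine⟩
  have hinf : {P ∈ A | OnLine P (affineLine e p v)} ∩ {P | OnLine P (infLine e)} =
      if dirPt e v hv ∈ A then {dirPt e v hv} else ∅ := by
    have hdir : ∀ P, OnLine P (affineLine e p v) ∧ OnLine P (infLine e) ↔ P = dirPt e v hv :=
      fun P => ⟨fun h => eq_dirPt_of_onLine_affineLine h.1 h.2,
        fun h => h ▸ ⟨onLine_dirPt_affineLine, onLine_dirPt_infLine⟩⟩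
    ext P
    split_ifs <;> simp [and_assoc, hdir] <;> aesop
  have hinj : Function.Injective fun s : K => affinePt e (p + s • v) :=
    affinePt_injective.comp ((add_right_injective p).comp (smul_left_injective K hv))
  rw [secantCount, ← Set.ncard_inter_add_ncard_sdiff_eq_ncard _ {P | OnLine P (infLine e)}, haff,
    hinf, Set.ncard_image_of_injective _ hinj, add_comm]
  split_ifs <;> simp

theorem ncard_not_onLine_infLine :
    {P ∈ A | ¬OnLine P (infLine e)}.ncard = (affinePt e ⁻¹' A).ncard := by
  rw [← Set.ncard_image_of_injective _ affinePt_injective, Set.image_preimage_eq_inter_range]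
  congr 1
  ext P
  refine and_congr_right fun _ => ⟨fun hP => ?_, ?_⟩
  · obtain ⟨p, rfl⟩ := exists_eq_affinePt hP
    exact ⟨p, rfl⟩
  · rintro ⟨p, rfl⟩
    exact not_onLine_affinePt_infLine

theorem secantCount_add_ncard_not_onLine [Finite K] (A : Set (Pt K)) (L : Submodule K (Fin 3 → K)) :
    secantCount A L + {P ∈ A | ¬OnLine P L}.ncard = A.ncard :=
  Set.ncard_inter_add_ncard_sdiff_eq_ncard A {P | OnLine P L}

theorem ncard_not_onLine_eq_card_of_secantCount_eq_two [Finite K]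
    {L : Submodule K (Fin 3 → K)} {P : Pt K} (hL : IsLine L) (hPA : P ∈ A) (hPL : OnLine P L)
    (hsec : ∀ M, IsLine M → OnLine P M → M ≠ L → secantCount A M = 2) :
    {Q ∈ A | ¬OnLine Q L}.ncard = Nat.card K := by
  obtain ⟨e, rfl, rfl⟩ := exists_chart hL hPL
  have hcol (y : K) : ∃ z, {z | affinePt e (y, z) ∈ A} = {z} := by
    have := hsec (affineLine e (y, 0) (0, 1)) (isLine_affineLine (by simp))
      onLine_dirPt_affineLine affineLine_ne_infLine
    rw [secantCount_affineLine (by simp), if_pos hPA] at this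
    rw [← Set.ncard_eq_one]
    simpa using this
  choose g hg using hcol
  have hgraph : affinePt e ⁻¹' A = Set.range fun y => (y, g y) := by
    ext ⟨y, z⟩
    have : affinePt e (y, z) ∈ A ↔ z = g y := Set.ext_iff.1 (hg y) z
    simp [this, eq_comm]
  rw [ncard_not_onLine_infLine, hgraph, ← Set.image_univ, Set.ncard_image_of_injective,
    Set.ncard_univ]
  exact fun _ _ h => congrArg Prod.fst h

end Counting

section KMArc

variable {q t : ℕ} {A : Set (Pt K)} {N : Pt K} {L : Submodule K (Fin 3 → K)}

theorem IsKMArc.secantCount_eq_two [Finite K] (hA : IsKMArc q t A) (hN : IsNucleus t A N)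
    (hL : IsLine L) (hNL : ¬OnLine N L) {P : Pt K} (hPA : P ∈ A) (hPL : OnLine P L) :
    secantCount A L = 2 := by
  rcases hA.2 L hL with h0 | h2 | ht
  · rw [secantCount, Set.ncard_eq_zero, Set.eq_empty_iff_forall_notMem] at h0
    exact absurd ⟨hPA, hPL⟩ (h0 P)
  · exact h2
  · exact absurd (hN L hL ht) hNL

theorem IsKMArc.even_secantCount (hA : IsKMArc q t A) (hN : IsNucleus t A N) (hL : IsLine L)
    (hNL : ¬OnLine N L) : Even (secantCount A L) := by
  rcases hA.2 L hL with h0 | h2 | ht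
  · simp [h0]
  · simp [h2]
  · exact absurd (hN L hL ht) hNL

theorem IsKMArc.ncard_not_onLine_eq_card [Finite K] (hA : IsKMArc q t A) (hN : IsNucleus t A N)
    (hL : IsLine L) (hNL : OnLine N L) {P : Pt K} (hPA : P ∈ A) (hPL : OnLine P L) (hPN : P ≠ N) :
    {Q ∈ A | ¬OnLine Q L}.ncard = Nat.card K :=
  ncard_not_onLine_eq_card_of_secantCount_eq_two hL hPA hPL fun _ hM hPM hML =>
    hA.secantCount_eq_two hN hM
      (fun hNM => hML (hM.eq_of_onLine hL hPN hPM hNM hPL hNL)) hPA hPM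

theorem IsKMArc.secantCount_eq [Finite K] (hA : IsKMArc (Nat.card K) t A) (hN : IsNucleus t A N)
    (hL : IsLine L) (hNL : OnLine N L) {P : Pt K} (hPA : P ∈ A) (hPL : OnLine P L) (hPN : P ≠ N) :
    secantCount A L = t := by
  have := secantCount_add_ncard_not_onLine A L
  rw [hA.ncard_not_onLine_eq_card hN hL hNL hPA hPL hPN, hA.1] at this
  omega

end KMArc

section Elation

variable {f : (Fin 3 → K) ≃ₗ[K] (Fin 3 → K)} {φ : Module.Dual K (Fin 3 → K)}

theorem exists_smul_eq_of_forall_projMap_eq {L : Submodule K (Fin 3 → K)}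
    (hfix : ∀ P, OnLine P L → projMap f P = P) : ∃ c : K, ∀ u ∈ L, f u = c • u := by
  have hsmul : ∀ u ∈ L, ∃ a : K, a • u = f u := by
    intro u hu
    obtain rfl | hu₀ := eq_or_ne u 0
    · exact ⟨0, by simp⟩
    · exact (Projectivization.mk_eq_mk_iff' ..).1 (hfix (.mk K u hu₀) (onLine_mk_iff.2 hu))
  have hmaps : ∀ u ∈ L, f.toLinearMap u ∈ L := by
    intro u hu
    obtain ⟨a, ha⟩ := hsmul u hu
    exact ha ▸ L.smul_mem a hu
  obtain ⟨c, hc⟩ := LinearMap.exists_eq_smul_id_of_forall_notLinearIndependent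
    (f := f.toLinearMap.restrict hmaps) fun u hli => by
      obtain ⟨a, ha⟩ := hsmul u u.2
      have := LinearIndependent.pair_iff.1 hli a (-1) (by ext1; simp [ha])
      simp at this
  exact ⟨c, fun u hu => congrArg Subtype.val (LinearMap.congr_fun hc ⟨u, hu⟩)⟩

theorem IsElation.exists_eq_smul_add_smul {L : Submodule K (Fin 3 → K)} {r : Fin 3 → K}
    {hr : r ≠ 0} (hf : IsElation f L (.mk K r hr)) {x : Fin 3 → K} (hx : x ∉ L) :
    ∃ a b : K, a • x + b • r = f x := by
  obtain ⟨-, hrL, -, hcentre⟩ := hf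
  rw [onLine_mk_iff] at hrL
  have hx₀ : x ≠ 0 := fun h => hx (h ▸ L.zero_mem)
  have hli : LinearIndependent K ![r, x] :=
    (LinearIndependent.pair_iff' hr).2 fun a ha => hx (ha ▸ L.smul_mem a hrL)
  have hline : IsLine (Submodule.span K {r, x}) := by
    have := finrank_span_eq_card hli
    rwa [Matrix.range_cons_cons_empty, Fintype.card_fin] at this
  have hfx : f x ∈ Submodule.span K {r, x} :=
    onLine_mk_iff.1 (hcentre _ hline (onLine_mk_iff.2 (Submodule.subset_span (by simp)))
      (.mk K x hx₀) (onLine_mk_iff.2 (Submodule.subset_span (by simp))))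
  obtain ⟨b, a, h⟩ := Submodule.mem_span_pair.1 hfx
  exact ⟨a, b, by rw [add_comm, h]⟩

theorem IsElation.exists_eq_smul_add {r : Fin 3 → K} {hr : r ≠ 0}
    (hf : IsElation f (LinearMap.ker φ) (.mk K r hr)) {c : K}
    (hc : ∀ u ∈ LinearMap.ker φ, f u = c • u) {x : Fin 3 → K} (hx : x ∉ LinearMap.ker φ) :
    ∃ b : K, f x = c • x + b • r := by
  have hr_ker : φ r = 0 := onLine_mk_iff.1 hf.2.1
  obtain ⟨a, b, hab⟩ := hf.exists_eq_smul_add_smul hx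
  obtain ⟨U, hU, hUr⟩ := hf.1.exists_onLine_ne (.mk K r hr)
  induction U using Projectivization.ind with
  | h u hu =>
    have hu_ker : φ u = 0 := onLine_mk_iff.1 hU
    obtain ⟨a', b', hab'⟩ := hf.exists_eq_smul_add_smul (x := x + u)
      (by simpa [hu_ker] using hx)
    rw [map_add, hc u hu_ker, ← hab] at hab'
    obtain rfl : a' = a := by
      have := congrArg φ hab'
      simpa [hr_ker, hu_ker, show φ x ≠ 0 from hx] using this
    have hcu : (c - a') • u = (b' - b) • r := by
      linear_combination (norm := module) (-1 : K) • hab'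
    suffices c = a' by exact ⟨b, by rw [this, hab]⟩
    by_contra hne
    refine hUr ((Projectivization.mk_eq_mk_iff' ..).2 ⟨(c - a')⁻¹ * (b' - b), ?_⟩)
    rw [mul_smul, ← hcu, inv_smul_smul₀ (sub_ne_zero.2 hne)]

theorem IsElationAxis.exists_eq_smul_add (hf : IsElationAxis f (LinearMap.ker φ)) :
    ∃ c : K, ∃ w ∈ LinearMap.ker φ, ∀ x, f x = c • (x + φ x • w) := by
  obtain ⟨R, hR⟩ := hf
  obtain ⟨c, hc⟩ := exists_smul_eq_of_forall_projMap_eq hR.2.2.1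
  induction R using Projectivization.ind with
  | h r hr =>
    have hr_ker := onLine_mk_iff.1 hR.2.1
    have hc₀ : c ≠ 0 := by
      rintro rfl
      simpa [hr] using hc r hr_ker
    obtain ⟨x₀, -, hx₀⟩ : ∃ x₀ ∈ (⊤ : Submodule K (Fin 3 → K)), x₀ ∉ LinearMap.ker φ := by
      refine SetLike.not_le_iff_exists.1 fun hle => ?_
      have := hR.1
      rw [IsLine, top_le_iff.1 hle] at this
      simp at this
    obtain ⟨b, hb⟩ := hR.exists_eq_smul_add hc hx₀
    have hφx₀ : φ x₀ ≠ 0 := hx₀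
    refine ⟨c, (c⁻¹ * (φ x₀)⁻¹ * b) • r, Submodule.smul_mem _ _ hr_ker, fun x => ?_⟩
    have := hc (x - (φ x / φ x₀) • x₀) (by simp [hφx₀])
    rw [map_sub, map_smul, hb] at this
    rw [sub_eq_iff_eq_add.1 this]
    match_scalars <;> field_simp
    ring

theorem isElationAxis_transvection (hL : IsLine (LinearMap.ker φ)) {w : Fin 3 → K} (hw : φ w = 0) :
    IsElationAxis (LinearEquiv.transvection hw) (LinearMap.ker φ) := by
  obtain ⟨R, hR, hwR⟩ : ∃ R : Pt K, OnLine R (LinearMap.ker φ) ∧ w ∈ R.submodule := by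
    obtain rfl | hw₀ := eq_or_ne w 0
    · obtain ⟨R, hR, -⟩ := hL.exists_onLine_ne (Classical.arbitrary _)
      exact ⟨R, hR, R.submodule.zero_mem⟩
    · exact ⟨.mk K w hw₀, onLine_mk_iff.2 hw, onLine_mk_iff.1 le_rfl⟩
  refine ⟨R, hL, hR, fun P hP => ?_, fun M _ hRM P hP => ?_⟩ <;>
    induction P using Projectivization.ind with
    | h x hx => ?_
  · refine (Projectivization.mk_eq_mk_iff' ..).2 ⟨1, ?_⟩
    have : φ x = 0 := onLine_mk_iff.1 hP
    simp [LinearMap.transvection.apply, this]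
  · exact onLine_mk_iff.2 (M.add_mem (onLine_mk_iff.1 hP) (M.smul_mem _ (hRM hwR)))

end Elation

section Translation

open AddAction

open scoped Pointwise

variable {f : (Fin 3 → K) ≃ₗ[K] (Fin 3 → K)} {e : (Fin 3 → K) ≃ₗ[K] K × K × K} {v : K × K}
  {A : Set (Pt K)}

theorem IsElationAxis.exists_projMap_affinePt (hf : IsElationAxis f (infLine e)) :
    ∃ v, ∀ p, projMap f (affinePt e p) = affinePt e (p + v) := by
  obtain ⟨c, w, hw, hfw⟩ := hf.exists_eq_smul_add
  obtain ⟨⟨a, v⟩, rfl⟩ := e.symm.surjective w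
  obtain rfl : a = 0 := by simpa using hw
  refine ⟨v, fun p => (Projectivization.mk_eq_mk_iff' ..).2 ⟨c, ?_⟩⟩
  simp [hfw, ← map_add]

theorem exists_isElationAxis_projMap_affinePt (e : (Fin 3 → K) ≃ₗ[K] K × K × K) (v : K × K) :
    ∃ f, IsElationAxis f (infLine e) ∧ ∀ p, projMap f (affinePt e p) = affinePt e (p + v) := by
  let φ : Module.Dual K (Fin 3 → K) := LinearMap.fst K K (K × K) ∘ₗ e.toLinearMap
  have hv : φ (e.symm (0, v)) = 0 := by simp [φ]
  refine ⟨LinearEquiv.transvection hv, isElationAxis_transvection isLine_infLine hv, fun p =>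
    (Projectivization.mk_eq_mk_iff' ..).2 ⟨1, ?_⟩⟩
  simp [LinearMap.transvection.apply, φ, ← map_add]

theorem mem_stabilizer_of_stabilises [Finite K]
    (hf : ∀ p, projMap f (affinePt e p) = affinePt e (p + v)) (hA : Stabilises f A) :
    v ∈ stabilizer (K × K) (affinePt e ⁻¹' A) := by
  refine (mem_stabilizer_set' (Set.toFinite _)).2 fun p hp => ?_
  rw [vadd_eq_add, add_comm, Set.mem_preimage, ← hf, ← hA]
  exact Set.mem_image_of_mem _ hp

theorem stabilises_of_mem_stabilizer [Finite K] (hf_axis : IsElationAxis f (infLine e))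
    (hf : ∀ p, projMap f (affinePt e p) = affinePt e (p + v))
    (hv : v ∈ stabilizer (K × K) (affinePt e ⁻¹' A)) : Stabilises f A := by
  obtain ⟨R, -, -, hfix, -⟩ := hf_axis
  refine Set.eq_of_subset_of_ncard_le ?_
    (Set.ncard_image_of_injective _ (Projectivization.map_injective _ _)).ge
  rintro _ ⟨P, hP, rfl⟩
  by_cases hP_inf : OnLine P (infLine e)
  · rwa [hfix P hP_inf]
  · obtain ⟨p, rfl⟩ := exists_eq_affinePt hP_inf
    rw [hf, add_comm]
    exact (mem_stabilizer_set.1 hv p).2 hP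

end Translation

section ElationKMArc

open AddAction

open scoped Pointwise

variable {t : ℕ} {A : Set (Pt K)} {e : (Fin 3 → K) ≃ₗ[K] K × K × K} {hv : ((0, 1) : K × K) ≠ 0}

theorem IsElationKMArc.nucleus_notMem [Finite K] {N : Pt K} {L : Submodule K (Fin 3 → K)}
    (hA : IsElationKMArc (Nat.card K) t A N L) {P : Pt K} (hPA : P ∈ A) (hPL : ¬OnLine P L) :
    N ∉ A := by
  intro hNA
  obtain ⟨hArc, hL, hNL, hN, htrans⟩ := hA
  obtain ⟨e, rfl, rfl⟩ := exists_chart hL hNL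
  obtain ⟨p, rfl⟩ := exists_eq_affinePt hPL
  have hline : IsLine (affineLine e p (0, 1)) := isLine_affineLine (by simp)
  have hne : affinePt e p ≠ dirPt e (0, 1) (by simp) := fun h => hPL (h ▸ onLine_dirPt_infLine)
  have hsec := hArc.secantCount_eq hN hline onLine_dirPt_affineLine hPA
    onLine_affinePt_affineLine hne
  obtain ⟨f, ⟨R, -, -, hfix, -⟩, -, hmap⟩ := htrans _ hline hsec affineLine_ne_infLine _ hNA
    onLine_dirPt_affineLine _ hPA onLine_affinePt_affineLine
  exact hne (hmap.symm.trans (hfix _ onLine_dirPt_infLine))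

theorem IsElationKMArc.secantCount_column [Finite K]
    (hA : IsElationKMArc (Nat.card K) t A (dirPt e (0, 1) hv) (infLine e)) {p : K × K}
    (hp : affinePt e p ∈ A) : secantCount A (affineLine e (p.1, 0) (0, 1)) = t := by
  refine hA.1.secantCount_eq hA.2.2.2.1 (isLine_affineLine hv) onLine_dirPt_affineLine hp
    (onLine_affinePt_affineLine_iff.2 ⟨p.2, by simp⟩) fun h => ?_
  exact not_onLine_affinePt_infLine (h ▸ onLine_dirPt_infLine)

theorem IsElationKMArc.ncard_column [Finite K]
    (hA : IsElationKMArc (Nat.card K) t A (dirPt e (0, 1) hv) (infLine e)) {p : K × K}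
    (hp : affinePt e p ∈ A) : {z | (p.1, z) ∈ affinePt e ⁻¹' A}.ncard = t := by
  have := hA.secantCount_column hp
  rw [secantCount_affineLine hv, if_neg (hA.nucleus_notMem hp not_onLine_affinePt_infLine)] at this
  simpa using this

theorem IsElationKMArc.sub_mem_stabilizer_of_fst_eq [Finite K]
    (hA : IsElationKMArc (Nat.card K) t A (dirPt e (0, 1) hv) (infLine e)) {p q : K × K}
    (hp : affinePt e p ∈ A) (hq : affinePt e q ∈ A) (hqp : q.1 = p.1) :
    q - p ∈ stabilizer (K × K) (affinePt e ⁻¹' A) := by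
  obtain ⟨f, hf, hfA, hfp⟩ := hA.2.2.2.2 _ (isLine_affineLine hv) (hA.secantCount_column hp)
    affineLine_ne_infLine _ hp (onLine_affinePt_affineLine_iff.2 ⟨p.2, by simp⟩)
    _ hq (onLine_affinePt_affineLine_iff.2 ⟨q.2, by simp [← hqp]⟩)
  obtain ⟨v, hv⟩ := hf.exists_projMap_affinePt
  obtain rfl : p + v = q := affinePt_injective (by rw [← hv, hfp])
  rw [add_sub_cancel_left]
  exact mem_stabilizer_of_stabilises hv hfA

theorem IsElationKMArc.ncard_line_modEq [Finite K]
    (hA : IsElationKMArc (Nat.card K) t A (dirPt e (0, 1) hv) (infLine e)) (m k k' : K) :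
    {y | (y, m * y + k) ∈ affinePt e ⁻¹' A}.ncard ≡
      {y | (y, m * y + k') ∈ affinePt e ⁻¹' A}.ncard [MOD 2] := by
  have hm : ((1, m) : K × K) ≠ 0 := by simp
  have hne : dirPt e (0, 1) hv ≠ dirPt e (1, m) hm := by simp [dirPt_eq_dirPt_iff]
  have heven (k : K) : Even ({y | (y, m * y + k) ∈ affinePt e ⁻¹' A}.ncard +
      if dirPt e (1, m) hm ∈ A then 1 else 0) := by
    have := hA.1.even_secantCount hA.2.2.2.1 (L := affineLine e (0, k) (1, m))
      (isLine_affineLine hm) fun h => hne (eq_dirPt_of_onLine_affineLine h onLine_dirPt_infLine)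
    rw [secantCount_affineLine hm] at this
    simpa [mul_comm, add_comm] using this
  refine Nat.ModEq.add_right_cancel' (if dirPt e (1, m) hm ∈ A then 1 else 0) ?_
  rw [Nat.ModEq, Nat.even_iff.1 (heven k), Nat.even_iff.1 (heven k')]

theorem IsElationKMArc.ncard_affine_eq [Finite K]
    (hA : IsElationKMArc (Nat.card K) t A (dirPt e (0, 1) hv) (infLine e)) {p : K × K}
    (hp : affinePt e p ∈ A) : (affinePt e ⁻¹' A).ncard = Nat.card K ∨
      (affinePt e ⁻¹' A).ncard = Nat.card K + t := by
  obtain ⟨hArc, hL, hNL, hN, -⟩ := id hA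
  rw [← ncard_not_onLine_infLine]
  by_cases! hinf : ∃ R ∈ A, OnLine R (infLine e)
  · obtain ⟨R, hRA, hR⟩ := hinf
    refine .inl (hArc.ncard_not_onLine_eq_card hN hL hNL hRA hR ?_)
    rintro rfl
    exact hA.nucleus_notMem hp not_onLine_affinePt_infLine hRA
  · right
    rw [← hArc.1]
    congr 1
    simpa using hinf

theorem IsElationKMArc.isTranslationKMArc [Finite K] (hK : Nat.card K = 4 * t) {N : Pt K}
    {L : Submodule K (Fin 3 → K)} (hA : IsElationKMArc (Nat.card K) t A N L) :
    IsTranslationKMArc A L := by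
  refine ⟨hA.2.1, fun P hPA hPL Q hQA hQL => ?_⟩
  obtain ⟨e, rfl, rfl⟩ := exists_chart hA.2.1 hA.2.2.1
  obtain ⟨p, rfl⟩ := exists_eq_affinePt hPL
  obtain ⟨q, rfl⟩ := exists_eq_affinePt hQL
  have hcount : (affinePt e ⁻¹' A).ncard = 4 * t ∨ (affinePt e ⁻¹' A).ncard = 5 * t := by
    have := hA.ncard_affine_eq hPA
    omega
  have hstab : q - p ∈ stabilizer (K × K) (affinePt e ⁻¹' A) :=
    sub_mem_stabilizer_of_ncard_line_modEq hK hcount (fun _ => hA.ncard_column)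
      (fun _ hp _ hq => hA.sub_mem_stabilizer_of_fst_eq hp hq) hA.ncard_line_modEq hPA hQA
  obtain ⟨f, hf_axis, hf⟩ := exists_isElationAxis_projMap_affinePt e (q - p)
  exact ⟨f, hf_axis, stabilises_of_mem_stabilizer hf_axis hf hstab, by rw [hf, add_sub_cancel]⟩

end ElationKMArc

/-- Theorem 3.12: every elation KM-arc of type `q/4` in `PG(2,q)` is a
translation KM-arc. -/
theorem elation_q4_is_translation
    {K : Type*} [Field K] [Fintype K] (h : ℕ) (hh : 4 ≤ h)
    (hcard : Fintype.card K = 2 ^ h)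
    (A : Set (Pt K)) (N : Pt K) (linf : Submodule K (Fin 3 → K))
    (hA : IsElationKMArc (2 ^ h) (2 ^ h / 4) A N linf) :
    ∃ l : Submodule K (Fin 3 → K), IsTranslationKMArc A l := by
  have hq : 4 ∣ 2 ^ h := pow_dvd_pow 2 (show 2 ≤ h by omega)
  rw [← Nat.card_eq_fintype_card] at hcard
  rw [← hcard] at hA hq
  exact ⟨linf, hA.isTranslationKMArc (Nat.mul_div_cancel' hq).symm⟩
end
end
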